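/- arXiv:1602.00429 — 2 statements merged into one kernel-verified Lean document; each statement's English description precedes it below -/
import Mathlib

section
/- Let Q be a regular local ring, f₁,…,f_c a Q-regular sequence, and R = Q/(f₁,…,f_c) (a local complete intersection). Let M, N, L be finitely generated R-modules with N ≠ 0 and Tor_i^R(M,N) = 0 for all i > 0. If Ext^i_R(L, M ⊗_R N) = 0 for all sufficiently large i, then Ext^i_R(L, M) = 0 for all sufficiently large i. -/
/-!
STATEMENT 1:
`f` a `Q`-regular sequence), `M, N, L` are finitely generated `R`-modules with `N ≠ 0` and
`Tor_i^R(M, N) = 0` for all `i > 0`, and `Ext^i_R(L, M ⊗_R N) = 0` for `i ≫ 0`, then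
`Ext^i_R(L, M) = 0` for `i ≫ 0`.
-/

open CategoryTheory CategoryTheory.Limits

universe u

/-- A Noetherian local ring is regular if its maximal ideal can be generated by
(Krull dimension of the ring) many elements. -/
def IsRegularLocal (Q : Type u) [CommRing Q] [IsLocalRing Q] : Prop :=
  IsNoetherianRing Q ∧ ∃ s : Finset Q, Ideal.span (s : Set Q) = IsLocalRing.maximalIdeal Q ∧
    (s.card : WithBot ℕ∞) = ringKrullDim Q

section RegularLocal

open IsLocalRing

theorem exists_erase_span_quotient {Q : Type*} [CommRing Q] [IsLocalRing Q] [IsNoetherianRing Q]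
    {d : ℕ} {t : Finset Q} {x : Q} (ht : t.card ≤ d)
    (hspan : Ideal.span (insert x (t : Set Q)) = maximalIdeal Q)
    (hd : ((d + 1 : ℕ) : WithBot ℕ∞) ≤ ringKrullDim Q) :
    ∃ (_ : IsLocalRing (Q ⧸ Ideal.span {x})) (s : Finset (Q ⧸ Ideal.span {x})), s.card ≤ d ∧
      Ideal.span (s : Set (Q ⧸ Ideal.span {x})) = maximalIdeal (Q ⧸ Ideal.span {x}) ∧
      (d : WithBot ℕ∞) ≤ ringKrullDim (Q ⧸ Ideal.span {x}) := by
  classical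
  have hx : x ∈ maximalIdeal Q := hspan ▸ Ideal.subset_span (Set.mem_insert _ _)
  have hle : Ideal.span {x} ≤ maximalIdeal Q := by simpa [Ideal.span_le] using hx
  have : Nontrivial (Q ⧸ Ideal.span {x}) :=
    Ideal.Quotient.nontrivial_iff.mpr (ne_top_of_le_ne_top (Ideal.IsPrime.ne_top inferInstance) hle)
  have hloc : IsLocalRing (Q ⧸ Ideal.span {x}) :=
    IsLocalRing.of_surjective' (Ideal.Quotient.mk _) Ideal.Quotient.mk_surjective
  refine ⟨hloc, t.image (Ideal.Quotient.mk _), Finset.card_image_le.trans ht, ?_, ?_⟩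
  · have h1 : (maximalIdeal Q).map (Ideal.Quotient.mk (Ideal.span {x})) =
        maximalIdeal (Q ⧸ Ideal.span {x}) := by
      rcases Ideal.map_eq_top_or_isMaximal_of_surjective (Ideal.Quotient.mk (Ideal.span {x}))
        Ideal.Quotient.mk_surjective (maximalIdeal.isMaximal Q) with h | h
      · exfalso
        have := Ideal.comap_map_of_surjective (Ideal.Quotient.mk (Ideal.span {x}))
          Ideal.Quotient.mk_surjective (maximalIdeal Q)
        rw [h, Ideal.comap_top, ← RingHom.ker_eq_comap_bot, Ideal.mk_ker,
          sup_eq_left.mpr hle] at this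
        exact Ideal.IsPrime.ne_top inferInstance this.symm
      · exact IsLocalRing.eq_maximalIdeal h
    rw [← h1, ← hspan, Ideal.map_span, Set.image_insert_eq,
      Ideal.Quotient.eq_zero_iff_mem.mpr (Ideal.mem_span_singleton_self x), Ideal.span_insert_zero,
      Finset.coe_image]
  · have h := hd.trans (ringKrullDim_le_ringKrullDim_quotient_add_encard ({x} : Set Q) (by
      simpa [IsLocalRing.ringJacobson_eq_maximalIdeal] using hx))
    rw [Set.encard_singleton] at h
    obtain ⟨a, ha⟩ := WithBot.ne_bot_iff_exists.mp
      (ringKrullDim_ne_bot (R := Q ⧸ Ideal.span {x}))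
    rw [← ha] at h ⊢
    induction a using WithTop.recTopCoe with
    | top => exact WithBot.coe_le_coe.mpr le_top
    | coe a =>
      have h : ((d + 1 : ℕ) : WithBot ℕ∞) ≤ ((a + 1 : ℕ) : WithBot ℕ∞) := h
      have h' : d ≤ a := Nat.le_of_succ_le_succ (by exact_mod_cast h)
      have h'' : (d : WithBot ℕ∞) ≤ (a : WithBot ℕ∞) := by exact_mod_cast h'
      exact h''

theorem ringKrullDim_le_card_of_span_eq_maximalIdeal {Q : Type*} [CommRing Q] [IsLocalRing Q]
    [IsNoetherianRing Q] {s : Finset Q} (hspan : Ideal.span (s : Set Q) = maximalIdeal Q) :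
    ringKrullDim Q ≤ (s.card : WithBot ℕ∞) := by
  refine (ringKrullDim_le_spanFinrank_maximalIdeal Q).trans ?_
  rw [← hspan]
  have h := Submodule.spanFinrank_span_le_ncard_of_finite (R := Q) s.finite_toSet
  rw [Set.ncard_coe_finset] at h
  exact_mod_cast h

theorem isDomain_of_span_eq_maximalIdeal (d : ℕ) : ∀ (Q : Type*) [CommRing Q] [IsLocalRing Q]
    [IsNoetherianRing Q] (s : Finset Q), s.card ≤ d →
    Ideal.span (s : Set Q) = maximalIdeal Q → (d : WithBot ℕ∞) ≤ ringKrullDim Q → IsDomain Q := by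
  classical
  induction d with
  | zero =>
    intro Q _ _ _ s hs hspan _
    obtain rfl : s = ∅ := Finset.card_eq_zero.mp (Nat.le_zero.mp hs)
    have : maximalIdeal Q = ⊥ := by simpa using hspan.symm
    have hf := isField_iff_maximalIdeal_eq.mpr this
    exact hf.isDomain
  | succ d ih =>
    intro Q _ _ _ s hs hspan hd
    have hdim : ringKrullDim Q ≠ 0 := fun h ↦ by
      rw [h] at hd
      exact absurd (show d + 1 ≤ 0 by exact_mod_cast hd) (by omega)
    have hfin := minimalPrimes.finite_of_isNoetherianRing Q
    obtain ⟨x, hxm, hx2, hxP⟩ : ∃ x ∈ maximalIdeal Q, x ∉ maximalIdeal Q ^ 2 ∧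
        ∀ P ∈ minimalPrimes Q, x ∉ P := by
      by_contra! hcon
      have hsub : ((maximalIdeal Q : Ideal Q) : Set Q) ⊆
          ⋃ I ∈ (↑(insert (maximalIdeal Q ^ 2) hfin.toFinset) : Set (Ideal Q)), (I : Set Q) := by
        intro x hx
        by_cases h2 : x ∈ maximalIdeal Q ^ 2
        · exact Set.mem_biUnion (by simp) h2
        · obtain ⟨P, hP, hxP⟩ := hcon x hx h2
          exact Set.mem_biUnion (by simp [hP]) hxP
      obtain ⟨I, hI, hle⟩ := (Ideal.subset_union_prime (f := id) (maximalIdeal Q ^ 2)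
        (maximalIdeal Q ^ 2) (fun i hi h _ ↦ by
          rcases Finset.mem_insert.mp hi with rfl | hi
          · exact absurd rfl h
          · exact ((hfin.mem_toFinset).mp hi).1.1)).mp hsub
      rcases Finset.mem_insert.mp hI with rfl | hI
      · have : maximalIdeal Q = ⊥ := Submodule.eq_bot_of_le_smul_of_le_jacobson_bot
          (maximalIdeal Q) _ (IsNoetherian.noetherian _) (by simpa [pow_two] using hle)
          (IsLocalRing.jacobson_eq_maximalIdeal _ bot_ne_top).ge
        exact hdim (ringKrullDim_eq_zero_of_isField (isField_iff_maximalIdeal_eq.mpr this))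
      · have hI := (hfin.mem_toFinset).mp hI
        have hIp : I.IsPrime := hI.1.1
        obtain rfl : I = maximalIdeal Q :=
          le_antisymm (IsLocalRing.le_maximalIdeal hIp.ne_top) hle
        apply hdim
        rw [← IsLocalRing.maximalIdeal_height_eq_ringKrullDim, Ideal.height_eq_zero_iff.mpr hI]
        rfl
    obtain ⟨y, hys, hy⟩ : ∃ y ∈ s, Ideal.span (insert x ((s.erase y : Finset Q) : Set Q)) =
        maximalIdeal Q := by
      obtain ⟨c, hc⟩ := (Submodule.mem_span_finset' (R := Q)).mp
        (show x ∈ Ideal.span (s : Set Q) by rwa [hspan])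
      obtain ⟨y, hy⟩ : ∃ y, IsUnit (c y) := by
        by_contra! hcon
        apply hx2
        rw [← hc]
        refine Ideal.sum_mem _ fun i _ ↦ ?_
        rw [pow_two, smul_eq_mul]
        exact Ideal.mul_mem_mul ((mem_maximalIdeal _).mpr (hcon i))
          (hspan ▸ Ideal.subset_span i.2)
      refine ⟨y, y.2, le_antisymm ?_ ?_⟩
      · rw [Ideal.span_le, Set.insert_subset_iff]
        refine ⟨hxm, fun z hz ↦ ?_⟩
        rw [← hspan]
        exact Ideal.subset_span (Finset.mem_of_mem_erase hz)
      · rw [← hspan, Ideal.span_le]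
        intro z hz
        by_cases hzy : z = y
        · subst hzy
          rw [← Finset.add_sum_erase _ _ (Finset.mem_univ y)] at hc
          refine (Ideal.unit_mul_mem_iff_mem _ hy).mp ?_
          have h2 : c y * (y : Q) = x - ∑ i ∈ Finset.univ.erase y, c i • (i : Q) := by
            rw [← hc]; simp
          rw [h2]
          refine Ideal.sub_mem _ (Ideal.subset_span (Set.mem_insert _ _))
            (Ideal.sum_mem _ fun i hi ↦ Ideal.mul_mem_left _ _
              (Ideal.subset_span (Set.mem_insert_of_mem _ ?_)))
          simpa [Subtype.coe_inj] using (Finset.mem_erase.mp hi).1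
        · exact Ideal.subset_span (Set.mem_insert_of_mem _ (by simpa [hzy] using hz))
    obtain ⟨_, s', hs', hspan', hd'⟩ := exists_erase_span_quotient (t := s.erase y) (d := d)
      (by rw [Finset.card_erase_of_mem hys]; omega) hy hd
    have hdom := ih _ s' hs' hspan' hd'
    have hprime : (Ideal.span {x}).IsPrime := (Ideal.Quotient.isDomain_iff_prime _).mp hdom
    obtain ⟨P, hP, hPx⟩ := Ideal.exists_minimalPrimes_le (bot_le (a := Ideal.span {x}))
    have hPp : P.IsPrime := hP.1.1
    have hbot : P = ⊥ := by
      refine Submodule.eq_bot_of_le_smul_of_le_jacobson_bot (maximalIdeal Q) _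
        (IsNoetherian.noetherian _) (fun p hp ↦ ?_)
        (IsLocalRing.jacobson_eq_maximalIdeal _ bot_ne_top).ge
      obtain ⟨a, rfl⟩ := Ideal.mem_span_singleton'.mp (hPx hp)
      rw [mul_comm]
      exact Ideal.mul_mem_mul hxm ((hPp.mem_or_mem hp).resolve_right (hxP P hP))
    subst hbot
    exact (IsDomain.of_bot_isPrime Q)

theorem exists_isWeaklyRegular_of_span_eq_maximalIdeal (d : ℕ) : ∀ (Q : Type*) [CommRing Q]
    [IsLocalRing Q] [IsNoetherianRing Q] (s : Finset Q), s.card ≤ d →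
    Ideal.span (s : Set Q) = maximalIdeal Q → (d : WithBot ℕ∞) ≤ ringKrullDim Q →
    ∃ l : List Q, RingTheory.Sequence.IsWeaklyRegular Q l ∧ Ideal.ofList l = maximalIdeal Q := by
  classical
  induction d with
  | zero =>
    intro Q _ _ _ s hs hspan _
    obtain rfl : s = ∅ := Finset.card_eq_zero.mp (Nat.le_zero.mp hs)
    exact ⟨[], .nil _ _, by simpa using hspan⟩
  | succ d ih =>
    intro Q _ _ _ s hs hspan hd
    have hcard : d + 1 ≤ s.card := by
      exact_mod_cast hd.trans (ringKrullDim_le_card_of_span_eq_maximalIdeal hspan)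
    obtain ⟨x, hx⟩ : s.Nonempty := Finset.card_pos.mp (by omega)
    have hdom := isDomain_of_span_eq_maximalIdeal (d + 1) Q s hs hspan hd
    have hins : Ideal.span (insert x ((s.erase x : Finset Q) : Set Q)) = maximalIdeal Q := by
      rw [← Finset.coe_insert, Finset.insert_erase hx, hspan]
    have hx0 : x ≠ 0 := by
      rintro rfl
      rw [Ideal.span_insert_zero] at hins
      have h := hd.trans (ringKrullDim_le_card_of_span_eq_maximalIdeal hins)
      rw [Finset.card_erase_of_mem hx] at h
      have : d + 1 ≤ s.card - 1 := by exact_mod_cast h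
      omega
    obtain ⟨_, s', hs', hspan', hd'⟩ := exists_erase_span_quotient (t := s.erase x) (d := d)
      (by rw [Finset.card_erase_of_mem hx]; omega) hins hd
    obtain ⟨l', hl', hl'm⟩ := ih _ s' hs' hspan' hd'
    obtain ⟨l, rfl⟩ := List.map_surjective_iff.mpr
      (Ideal.Quotient.mk_surjective (I := Ideal.span {x})) l'
    refine ⟨x :: l, .cons ?_ ?_, ?_⟩
    · exact fun a b hab ↦ mul_left_cancel₀ hx0 hab
    · have h := (RingTheory.Sequence.isWeaklyRegular_map_algebraMap_iff
        (S := Q ⧸ Ideal.span {x}) (M := Q ⧸ Ideal.span {x}) l).mp hl'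
      refine (LinearEquiv.isWeaklyRegular_congr (Submodule.quotEquivOfEq _ _ ?_) l).mp h
      rw [← Submodule.ideal_span_singleton_smul, smul_eq_mul, Ideal.mul_top]
    · have hcomap : (maximalIdeal (Q ⧸ Ideal.span {x})).comap (Ideal.Quotient.mk _) =
          maximalIdeal Q :=
        IsLocalRing.eq_maximalIdeal (Ideal.comap_isMaximal_of_surjective _
          Ideal.Quotient.mk_surjective)
      rw [← Ideal.map_ofList] at hl'm
      have h := congrArg (Ideal.comap (Ideal.Quotient.mk (Ideal.span {x}))) hl'm
      rw [Ideal.comap_map_of_surjective _ Ideal.Quotient.mk_surjective, ← RingHom.ker_eq_comap_bot,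
        Ideal.mk_ker, hcomap] at h
      rw [Ideal.ofList_cons, sup_comm, h]

end RegularLocal

section Derived

open Pretriangulated

section Triangulated

variable {𝒟 : Type*} [Category* 𝒟] [HasShift 𝒟 ℤ] [Preadditive 𝒟] {L : 𝒟}

/-- All morphisms `L ⟶ X⟦i⟧` vanish for `i ≫ 0`. -/
def EventuallyNoShiftedHom (L X : 𝒟) : Prop :=
  ∃ n : ℕ, ∀ i : ℕ, n ≤ i → ∀ g : L ⟶ X⟦(i : ℤ)⟧, g = 0

/-- All the modules of morphisms `L ⟶ X⟦i⟧` with `i ≥ 0` are finitely generated. -/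
def FiniteShiftedHom (R : Type*) [CommRing R] [Linear R 𝒟] (L X : 𝒟) : Prop :=
  ∀ i : ℕ, Module.Finite R (L ⟶ X⟦(i : ℤ)⟧)

namespace EventuallyNoShiftedHom

theorem of_retract {X Y : 𝒟} (s : X ⟶ Y) (r : Y ⟶ X) (hsr : s ≫ r = 𝟙 X)
    (h : EventuallyNoShiftedHom L Y) : EventuallyNoShiftedHom L X := by
  obtain ⟨n, hn⟩ := h
  refine ⟨n, fun i hi g ↦ ?_⟩
  have h1 : g ≫ s⟦(i : ℤ)⟧' = 0 := hn i hi _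
  rw [← Category.comp_id g, ← (shiftFunctor 𝒟 (i : ℤ)).map_id, ← hsr,
    (shiftFunctor 𝒟 (i : ℤ)).map_comp, reassoc_of% h1, zero_comp]

theorem of_iso {X Y : 𝒟} (e : X ≅ Y) (h : EventuallyNoShiftedHom L X) :
    EventuallyNoShiftedHom L Y :=
  h.of_retract e.inv e.hom e.inv_hom_id

theorem shift {X : 𝒟} (h : EventuallyNoShiftedHom L X) :
    EventuallyNoShiftedHom L (X⟦(1 : ℤ)⟧) := by
  obtain ⟨n, hn⟩ := h
  refine ⟨n, fun i hi g ↦ ?_⟩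
  have h1 := hn (i + 1) (by omega)
    (g ≫ (shiftFunctorAdd' 𝒟 1 (i : ℤ) ((i + 1 : ℕ) : ℤ) (by push_cast; ring)).inv.app X)
  rwa [← cancel_mono
    ((shiftFunctorAdd' 𝒟 1 (i : ℤ) ((i + 1 : ℕ) : ℤ) (by push_cast; ring)).inv.app X), zero_comp]

end EventuallyNoShiftedHom

variable {R : Type*} [CommRing R] [Linear R 𝒟]

namespace FiniteShiftedHom

theorem of_iso [∀ n : ℤ, (shiftFunctor 𝒟 n).Linear R] {X Y : 𝒟} (e : X ≅ Y)
    (h : FiniteShiftedHom R L X) : FiniteShiftedHom R L Y := fun i ↦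
  have := h i
  Module.Finite.equiv (Linear.homCongr R (Iso.refl L) ((shiftFunctor 𝒟 (i : ℤ)).mapIso e))

theorem shift {X : 𝒟} (h : FiniteShiftedHom R L X) : FiniteShiftedHom R L (X⟦(1 : ℤ)⟧) := fun i ↦
  have := h (i + 1)
  Module.Finite.equiv (Linear.homCongr R (Iso.refl L)
    ((shiftFunctorAdd' 𝒟 1 (i : ℤ) ((i + 1 : ℕ) : ℤ) (by push_cast; ring)).app X))

end FiniteShiftedHom

variable [HasZeroObject 𝒟] [∀ n : ℤ, (shiftFunctor 𝒟 n).Additive] [Pretriangulated 𝒟]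

theorem exists_eq_comp_shift_map {T : Triangle 𝒟} (hT : T ∈ distTriang 𝒟) {i : ℤ}
    (g : L ⟶ T.obj₂⟦i⟧) (hg : g ≫ T.mor₂⟦i⟧' = 0) :
    ∃ g' : L ⟶ T.obj₁⟦i⟧, g = g' ≫ T.mor₁⟦i⟧' := by
  obtain ⟨g', hg'⟩ := Triangle.coyoneda_exact₂ ((Triangle.shiftFunctor 𝒟 i).obj T)
    (Triangle.shift_distinguished _ hT i) g
    (by
      change g ≫ (i.negOnePow • T.mor₂⟦i⟧') = 0
      rw [Linear.comp_units_smul, hg, smul_zero])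
  refine ⟨i.negOnePow • (show L ⟶ T.obj₁⟦i⟧ from g'), ?_⟩
  rw [Linear.units_smul_comp]
  refine hg'.trans ?_
  change (show L ⟶ T.obj₁⟦i⟧ from g') ≫ (i.negOnePow • T.mor₁⟦i⟧') = _
  rw [Linear.comp_units_smul]

theorem EventuallyNoShiftedHom.obj₂ {T : Triangle 𝒟} (hT : T ∈ distTriang 𝒟)
    (h₁ : EventuallyNoShiftedHom L T.obj₁)
    (h₃ : EventuallyNoShiftedHom L T.obj₃) : EventuallyNoShiftedHom L T.obj₂ := by
  obtain ⟨n, hn⟩ := h₁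
  obtain ⟨m, hm⟩ := h₃
  refine ⟨max n m, fun i hi g ↦ ?_⟩
  obtain ⟨g', hg'⟩ := exists_eq_comp_shift_map hT g
    (hm i (le_of_max_le_right hi) _)
  rw [hg', hn i (le_of_max_le_left hi) g', zero_comp]

theorem EventuallyNoShiftedHom.obj₃ {T : Triangle 𝒟} (hT : T ∈ distTriang 𝒟)
    (h₁ : EventuallyNoShiftedHom L T.obj₁)
    (h₂ : EventuallyNoShiftedHom L T.obj₂) : EventuallyNoShiftedHom L T.obj₃ :=
  obj₂ (rot_of_distTriang _ hT) h₂ h₁.shift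

theorem FiniteShiftedHom.obj₂ [IsNoetherianRing R] {T : Triangle 𝒟} (hT : T ∈ distTriang 𝒟)
    (h₁ : FiniteShiftedHom R L T.obj₁) (h₃ : FiniteShiftedHom R L T.obj₃) :
    FiniteShiftedHom R L T.obj₂ := fun i ↦ by
  have := h₁ i
  have := h₃ i
  have : IsNoetherian R (L ⟶ T.obj₂⟦(i : ℤ)⟧) :=
    isNoetherian_of_range_eq_ker (Linear.rightComp R L (T.mor₁⟦(i : ℤ)⟧'))
      (Linear.rightComp R L (T.mor₂⟦(i : ℤ)⟧')) (by
        refine le_antisymm ?_ fun g hg ↦ ?_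
        · rintro _ ⟨g, rfl⟩
          simp [← (shiftFunctor 𝒟 (i : ℤ)).map_comp, comp_distTriang_mor_zero₁₂ _ hT]
        · obtain ⟨g', hg'⟩ := exists_eq_comp_shift_map hT g hg
          exact ⟨g', hg'.symm⟩)
  infer_instance

theorem FiniteShiftedHom.obj₃ [IsNoetherianRing R] {T : Triangle 𝒟} (hT : T ∈ distTriang 𝒟)
    (h₁ : FiniteShiftedHom R L T.obj₁) (h₂ : FiniteShiftedHom R L T.obj₂) :
    FiniteShiftedHom R L T.obj₃ :=
  obj₂ (rot_of_distTriang _ hT) h₂ h₁.shift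

theorem EventuallyNoShiftedHom.of_smul_triangle [∀ n : ℤ, (shiftFunctor 𝒟 n).Linear R]
    {X Y : 𝒟} {r : R} (hr : r ∈ (⊥ : Ideal R).jacobson) {g : X ⟶ Y} {h : Y ⟶ X⟦(1 : ℤ)⟧}
    (hT : Triangle.mk (r • 𝟙 X) g h ∈ distTriang 𝒟) (hfin : FiniteShiftedHom R L X)
    (hY : EventuallyNoShiftedHom L Y) : EventuallyNoShiftedHom L X := by
  obtain ⟨n, hn⟩ := hY
  refine ⟨n, fun i hi a ↦ ?_⟩
  have := hfin i
  have htop : (⊤ : Submodule R (L ⟶ X⟦(i : ℤ)⟧)) = ⊥ := by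
    refine Submodule.eq_bot_of_le_smul_of_le_jacobson_bot (Ideal.span {r}) _
      Module.Finite.fg_top (fun b _ ↦ ?_) (by simpa [Ideal.span_le] using hr)
    obtain ⟨c, hc⟩ : ∃ c : L ⟶ X⟦(i : ℤ)⟧, b = c ≫ (r • 𝟙 X)⟦(i : ℤ)⟧' :=
      exists_eq_comp_shift_map hT b (hn i hi _)
    rw [hc, CategoryTheory.Functor.map_smul, (shiftFunctor 𝒟 (i : ℤ)).map_id, Linear.comp_smul,
      Category.comp_id]
    exact Submodule.smul_mem_smul (Ideal.mem_span_singleton_self r) trivial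
  exact (Submodule.mem_bot R).mp (htop ▸ Submodule.mem_top)

theorem distinguished_of_iso₃ {X Y Z Z' : 𝒟} {f : X ⟶ Y} {g : Y ⟶ Z} {h : Z ⟶ X⟦(1 : ℤ)⟧}
    (H : Triangle.mk f g h ∈ distTriang 𝒟) (e : Z' ≅ Z) :
    Triangle.mk f (g ≫ e.inv) (e.hom ≫ h) ∈ distTriang 𝒟 :=
  isomorphic_distinguished _ H _ (Triangle.isoMk _ _ (Iso.refl X) (Iso.refl Y) e
    (show f ≫ 𝟙 Y = 𝟙 X ≫ f by simp) (show (g ≫ e.inv) ≫ e.hom = 𝟙 Y ≫ g by simp)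
    (show (e.hom ≫ h) ≫ (𝟙 X)⟦(1 : ℤ)⟧' = e.hom ≫ h by simp))

end Triangulated

section Koszul

open CochainComplex HomComplex

variable {Q : Type*} [CommRing Q]

theorem smul_hom_eq_zero {C : Type*} [Category* C] [Preadditive C] [Linear Q C] {r : Q}
    {A E : CochainComplex C ℤ} (hE : r • 𝟙 E = 0) (a : A ⟶ E) :
    r • a = 0 := by
  rw [← Category.comp_id a, ← Linear.comp_smul, hE, comp_zero]

section Linear

variable {C : Type*} [Category* C] [Preadditive C] [Linear Q C] [HasBinaryBiproducts C]

/-- The mapping cone of the multiplication by `r` as a functor on cochain complexes. -/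
noncomputable def smulCone (r : Q) : CochainComplex C ℤ ⥤ CochainComplex C ℤ where
  obj A := mappingCone (r • 𝟙 A)
  map φ := mappingCone.map _ _ φ φ (by simp)
  map_id _ := mappingCone.map_id _
  map_comp _ _ := mappingCone.map_comp _ _ _ _ _ _ _ _ _

/-- The Koszul complex on a list of scalars with coefficients in a cochain complex. -/
noncomputable def koszul : List Q → (CochainComplex C ℤ ⥤ CochainComplex C ℤ)
  | [] => 𝟭 _
  | r :: rs => smulCone r ⋙ koszul rs

/-- A morphism to a complex annihilated by `r` extends to the mapping cone of `r`. -/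
noncomputable def smulConeDesc (r : Q) {A E : CochainComplex C ℤ} (a : A ⟶ E) (ha : r • a = 0) :
    (smulCone r).obj A ⟶ E :=
  mappingCone.desc (r • 𝟙 A) 0 a (by simp [ha])

theorem smulCone_map_desc (r : Q) {A B E : CochainComplex C ℤ} (φ : A ⟶ B) (b : B ⟶ E)
    (hb : r • b = 0) (hb' : r • (φ ≫ b) = 0) :
    (smulCone r).map φ ≫ smulConeDesc r b hb = smulConeDesc r (φ ≫ b) hb' := by
  ext n
  simp [mappingCone.ext_from_iff _ (n + 1) n rfl, smulConeDesc, smulCone, mappingCone.map]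

theorem smulConeDesc_comp (r : Q) {A B E : CochainComplex C ℤ} (a : A ⟶ B) (b : B ⟶ E)
    (ha : r • a = 0) (hb' : r • (a ≫ b) = 0) :
    smulConeDesc r a ha ≫ b = smulConeDesc r (a ≫ b) hb' := by
  ext n
  change (mappingCone.desc (r • 𝟙 A) 0 a _).f n ≫ b.f n = (mappingCone.desc (r • 𝟙 A) 0 _ _).f n
  simp [mappingCone.ext_from_iff _ (n + 1) n rfl]

/-- A morphism to a complex annihilated by `xs` extends to the Koszul complex. -/
noncomputable def koszulDesc {E : CochainComplex C ℤ} : ∀ (xs : List Q)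
    (_ : ∀ x ∈ xs, x • 𝟙 E = 0) {A : CochainComplex C ℤ} (_ : A ⟶ E), (koszul xs).obj A ⟶ E
  | [], _, _, a => a
  | r :: rs, h, _, a => koszulDesc rs (fun x hx ↦ h x (List.mem_cons_of_mem _ hx))
      (smulConeDesc r a (smul_hom_eq_zero (h r List.mem_cons_self) a))

theorem koszul_map_desc {E : CochainComplex C ℤ} (xs : List Q) (h : ∀ x ∈ xs, x • 𝟙 E = 0)
    {A B : CochainComplex C ℤ} (φ : A ⟶ B) (b : B ⟶ E) :
    (koszul xs).map φ ≫ koszulDesc xs h b = koszulDesc xs h (φ ≫ b) := by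
  induction xs generalizing A B with
  | nil => rfl
  | cons r rs ih =>
    refine (ih _ _ _).trans ?_
    rw [smulCone_map_desc (hb' := smul_hom_eq_zero (h r List.mem_cons_self) _)]
    rfl

end Linear

section Abelian

variable {C : Type*} [Category* C] [Abelian C] [Linear Q C]

theorem isKProjective_mappingCone {A B : CochainComplex C ℤ} (φ : A ⟶ B) [A.IsKProjective]
    [B.IsKProjective] : (mappingCone φ).IsKProjective := by
  rw [isKProjective_iff_leftOrthogonal]
  exact ObjectProperty.ext_of_isTriangulatedClosed₃ _ _
    (HomotopyCategory.mappingCone_triangleh_distinguished φ)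
    (IsKProjective.leftOrthogonal A) (IsKProjective.leftOrthogonal B)

theorem isKProjective_koszul (xs : List Q) (A : CochainComplex C ℤ) [A.IsKProjective] :
    ((koszul xs).obj A).IsKProjective := by
  induction xs generalizing A with
  | nil => assumption
  | cons r rs ih =>
    have : ((smulCone r).obj A).IsKProjective := isKProjective_mappingCone _
    exact ih _

attribute [local instance] HasDerivedCategory.standard in
theorem quasiIso_mappingCone_map {K₁ L₁ K₂ L₂ : CochainComplex C ℤ} {φ₁ : K₁ ⟶ L₁}
    {φ₂ : K₂ ⟶ L₂} {a : K₁ ⟶ K₂} {b : L₁ ⟶ L₂} (comm : φ₁ ≫ b = a ≫ φ₂) [QuasiIso a]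
    [QuasiIso b] : QuasiIso (mappingCone.map φ₁ φ₂ a b comm) := by
  rw [← DerivedCategory.isIso_Q_map_iff_quasiIso]
  exact isIso₃_of_isIso₁₂
    (DerivedCategory.Q.mapTriangle.map (mappingCone.triangleMap φ₁ φ₂ a b comm))
    (DerivedCategory.mappingCone_triangle_distinguished φ₁)
    (DerivedCategory.mappingCone_triangle_distinguished φ₂)
    (inferInstanceAs (IsIso (DerivedCategory.Q.map a)))
    (inferInstanceAs (IsIso (DerivedCategory.Q.map b)))

theorem quasiIso_smulConeDesc {r : Q} {A E : CochainComplex C ℤ} (g : A ⟶ E) (hg : r • g = 0)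
    (h : (ShortComplex.mk (r • 𝟙 A) g (by simp [hg])).ShortExact) :
    QuasiIso (smulConeDesc r g hg) := by
  let S := ShortComplex.mk (r • 𝟙 A) g (by simp [hg])
  have h2 : smulConeDesc r g hg = mappingCone.descShortComplex S := by
    unfold smulConeDesc mappingCone.descShortComplex
    rfl
  have h3 := mappingCone.quasiIso_descShortComplex (S := S) h
  rw [h2]
  exact h3

attribute [local instance] HasDerivedCategory.standard in
/-- A quasi-isomorphism between K-projective complexes factoring through another one. -/
theorem exists_homotopy_retract {K F E : CochainComplex C ℤ} [K.IsKProjective] [F.IsKProjective]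
    (e : K ⟶ F) (q : F ⟶ E) [hq : QuasiIso (e ≫ q)] :
    ∃ g : F ⟶ K, Nonempty (Homotopy (e ≫ g) (𝟙 K)) := by
  have := (DerivedCategory.isIso_Q_map_iff_quasiIso (C := C) (e ≫ q)).mpr hq
  obtain ⟨g, hg⟩ := (IsKProjective.Qh_map_bijective F _).surjective
    ((DerivedCategory.quotientCompQhIso C).hom.app F ≫ DerivedCategory.Q.map q ≫
      inv (DerivedCategory.Q.map (e ≫ q)) ≫ (DerivedCategory.quotientCompQhIso C).inv.app K)
  obtain ⟨g, rfl⟩ := (HomotopyCategory.quotient _ _).map_surjective g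
  refine ⟨g, ⟨HomotopyCategory.homotopyOfEq _ _
    ((IsKProjective.Qh_map_bijective K _).injective ?_)⟩⟩
  rw [CategoryTheory.Functor.map_comp, CategoryTheory.Functor.map_comp, hg]
  have h1 := DerivedCategory.quotientCompQhIso_hom_naturality e
  have h2 : DerivedCategory.Q.map e ≫ DerivedCategory.Q.map q ≫
      inv (DerivedCategory.Q.map (e ≫ q)) = 𝟙 _ := by
    rw [← Category.assoc, ← CategoryTheory.Functor.map_comp, IsIso.hom_inv_id]
  rw [reassoc_of% h1, reassoc_of% h2]
  simp

end Abelian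

open RingTheory.Sequence Pointwise

theorem quasiIso_koszulDesc {Q : Type u} [CommRing Q] (xs : List Q)
    {A : CochainComplex (ModuleCat.{u} Q) ℤ}
    {B k : ModuleCat.{u} Q} (hxs : IsWeaklyRegular B xs)
    (π : A ⟶ (CochainComplex.singleFunctor _ 0).obj B) [QuasiIso π] (c : B ⟶ k)
    (hc : Function.Surjective c) (hc' : LinearMap.ker c.hom = Ideal.ofList xs • ⊤)
    (hk : ∀ x ∈ xs, x • 𝟙 ((CochainComplex.singleFunctor _ 0).obj k) = 0) :
    QuasiIso (koszulDesc xs hk (π ≫ (CochainComplex.singleFunctor _ 0).map c)) := by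
  induction xs generalizing A B with
  | nil =>
    have : IsIso c := by
      rw [ConcreteCategory.isIso_iff_bijective]
      refine ⟨?_, hc⟩
      rw [← LinearMap.ker_eq_bot (f := c.hom), hc']
      simp
    change QuasiIso (π ≫ (CochainComplex.singleFunctor _ 0).map c)
    infer_instance
  | cons r rs ih =>
    rw [isWeaklyRegular_cons_iff] at hxs
    let B' : ModuleCat.{u} Q := ModuleCat.of Q (QuotSMulTop r B)
    let p : B ⟶ B' := ModuleCat.ofHom (Submodule.mkQ _)
    have hp : r • p = 0 := by
      ext b
      exact (Submodule.Quotient.mk_eq_zero _).mpr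
        (Submodule.smul_mem_pointwise_smul b r ⊤ trivial)
    have hker : r • (⊤ : Submodule Q B) ≤ LinearMap.ker c.hom := by
      rw [hc', Ideal.ofList_cons, Submodule.sup_smul, Submodule.ideal_span_singleton_smul]
      exact le_sup_left
    let c' : B' ⟶ k := ModuleCat.ofHom (Submodule.liftQ _ c.hom hker)
    have hpc : p ≫ c' = c := rfl
    have hsp : r • (CochainComplex.singleFunctor _ 0).map p = 0 := by
      rw [← CategoryTheory.Functor.map_smul, hp, CategoryTheory.Functor.map_zero]
    let π' : (smulCone r).obj A ⟶ (CochainComplex.singleFunctor _ 0).obj B' :=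
      smulConeDesc r (π ≫ (CochainComplex.singleFunctor _ 0).map p) (by
        rw [← Linear.comp_smul, hsp, comp_zero])
    have : QuasiIso π' := by
      let S : ShortComplex (CochainComplex (ModuleCat.{u} Q) ℤ) :=
        .mk (r • 𝟙 ((CochainComplex.singleFunctor _ 0).obj B))
          ((CochainComplex.singleFunctor _ 0).map p) (by simp [hsp])
      have hS : S.ShortExact := by
        let S₀ : ShortComplex (ModuleCat.{u} Q) := .mk (r • 𝟙 B) p (by simp [hp])
        have hS₀ : S₀.ShortExact :=
          { exact := by
              rw [ShortComplex.moduleCat_exact_iff]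
              intro b hb
              obtain ⟨b', -, rfl⟩ := (Submodule.Quotient.mk_eq_zero _).mp hb
              exact ⟨b', rfl⟩
            mono_f := (ModuleCat.mono_iff_injective _).mpr hxs.1
            epi_g := (ModuleCat.epi_iff_surjective _).mpr (Submodule.mkQ_surjective _) }
        have hf : (CochainComplex.singleFunctor _ 0).map (r • 𝟙 B) =
            r • 𝟙 ((CochainComplex.singleFunctor _ 0).obj B) := by
          rw [CategoryTheory.Functor.map_smul, CategoryTheory.Functor.map_id]
        have h := hS₀.map_of_exact (HomologicalComplex.single _ (ComplexShape.up ℤ) 0)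
        refine ShortComplex.shortExact_of_iso (S₁ := S₀.map (HomologicalComplex.single _ _ 0))
          (S₂ := S) (ShortComplex.isoMk
            (Iso.refl ((CochainComplex.singleFunctor _ 0).obj B))
            (Iso.refl ((CochainComplex.singleFunctor _ 0).obj B))
            (Iso.refl ((CochainComplex.singleFunctor _ 0).obj B')) ?_ ?_) h
        · exact (Category.id_comp _).trans (hf.symm.trans (Category.comp_id _).symm)
        · exact (Category.id_comp _).trans (Category.comp_id _).symm
      have h1 : (smulCone r).map π ≫
          smulConeDesc r ((CochainComplex.singleFunctor _ 0).map p) hsp = π' :=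
        smulCone_map_desc r π _ hsp _
      have h2 : QuasiIso ((smulCone r).map π) := quasiIso_mappingCone_map (by simp)
      have h3 := quasiIso_smulConeDesc _ hsp hS
      rw [← h1]
      exact quasiIso_comp _ _
    have := ih (B := B') hxs.2 π' c' (fun y ↦ ?_) ?_ (fun x hx ↦ hk x (List.mem_cons_of_mem _ hx))
    · rw [smulConeDesc_comp (hb' := by simp [smul_hom_eq_zero (hk r List.mem_cons_self)])] at this
      simp only [Category.assoc, ← CategoryTheory.Functor.map_comp, hpc] at this
      exact this
    · obtain ⟨b, rfl⟩ := hc y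
      exact ⟨p b, rfl⟩
    · refine (Submodule.ker_liftQ _ _ hker).trans ?_
      rw [hc', Ideal.ofList_cons, Submodule.sup_smul, Submodule.ideal_span_singleton_smul,
        Submodule.map_sup, Submodule.mkQ_map_self, bot_sup_eq, Submodule.map_smul'',
        Submodule.map_top, Submodule.range_mkQ]

end Koszul

section MapKoszul

open CategoryTheory.Pretriangulated CochainComplex HomComplex RingTheory.Sequence

theorem exists_distinguished_map_mappingCone {C C' : Type*} [Category* C] [Preadditive C]
    [HasBinaryBiproducts C] [Category* C'] [Abelian C'] [HasDerivedCategory C'] (Φ : C ⥤ C')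
    [Φ.Additive] {A B : CochainComplex C ℤ} (φ : A ⟶ B) :
    ∃ (g : _ ⟶ DerivedCategory.Q.obj ((Φ.mapHomologicalComplex _).obj (mappingCone φ))) (h : _),
      Triangle.mk (DerivedCategory.Q.map ((Φ.mapHomologicalComplex (.up ℤ)).map φ)) g h ∈
        distTriang (DerivedCategory C') := by
  let e := DerivedCategory.Q.mapIso (mappingCone.mapHomologicalComplexIso φ Φ)
  exact ⟨_, _, distinguished_of_iso₃
    (DerivedCategory.mappingCone_triangle_distinguished _) e⟩

variable {Q R : Type u} [CommRing Q] [CommRing R] [Algebra Q R]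
  [HasDerivedCategory (ModuleCat.{u} R)] (Φ : ModuleCat.{u} Q ⥤ ModuleCat.{u} R) [Φ.Additive]
  {L : DerivedCategory (ModuleCat.{u} R)}

theorem exists_distinguished_smulCone
    (hΦ : ∀ (r : Q) (X : ModuleCat.{u} Q), Φ.map (r • 𝟙 X) = algebraMap Q R r • 𝟙 (Φ.obj X))
    (r : Q) (A : CochainComplex (ModuleCat.{u} Q) ℤ) :
    ∃ (g : _ ⟶ DerivedCategory.Q.obj ((Φ.mapHomologicalComplex _).obj ((smulCone r).obj A)))
      (h : _), Triangle.mk (algebraMap Q R r •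
        𝟙 (DerivedCategory.Q.obj ((Φ.mapHomologicalComplex (.up ℤ)).obj A))) g h ∈
        distTriang (DerivedCategory (ModuleCat.{u} R)) := by
  obtain ⟨g, h, H⟩ := exists_distinguished_map_mappingCone Φ (r • 𝟙 A)
  have : (Φ.mapHomologicalComplex (.up ℤ)).map (r • 𝟙 A) = algebraMap Q R r • 𝟙 _ := by
    ext1 n
    exact hΦ r _
  rw [this, CategoryTheory.Functor.map_smul, CategoryTheory.Functor.map_id] at H
  exact ⟨g, h, H⟩

theorem EventuallyNoShiftedHom.map_koszul
    (hΦ : ∀ (r : Q) (X : ModuleCat.{u} Q), Φ.map (r • 𝟙 X) = algebraMap Q R r • 𝟙 (Φ.obj X))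
    (xs : List Q) {A : CochainComplex (ModuleCat.{u} Q) ℤ}
    (h : EventuallyNoShiftedHom L (DerivedCategory.Q.obj ((Φ.mapHomologicalComplex _).obj A))) :
    EventuallyNoShiftedHom L
      (DerivedCategory.Q.obj ((Φ.mapHomologicalComplex _).obj ((koszul xs).obj A))) := by
  induction xs generalizing A with
  | nil => exact h
  | cons r rs ih =>
    obtain ⟨_, _, H⟩ := exists_distinguished_smulCone Φ hΦ r A
    exact ih (EventuallyNoShiftedHom.obj₃ H h h)

theorem EventuallyNoShiftedHom.of_map_koszul [IsNoetherianRing R]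
    (hΦ : ∀ (r : Q) (X : ModuleCat.{u} Q), Φ.map (r • 𝟙 X) = algebraMap Q R r • 𝟙 (Φ.obj X))
    (xs : List Q) (hxs : ∀ x ∈ xs, algebraMap Q R x ∈ (⊥ : Ideal R).jacobson)
    {A : CochainComplex (ModuleCat.{u} Q) ℤ}
    (hfin : FiniteShiftedHom R L (DerivedCategory.Q.obj ((Φ.mapHomologicalComplex _).obj A)))
    (h : EventuallyNoShiftedHom L
      (DerivedCategory.Q.obj ((Φ.mapHomologicalComplex _).obj ((koszul xs).obj A)))) :
    EventuallyNoShiftedHom L (DerivedCategory.Q.obj ((Φ.mapHomologicalComplex _).obj A)) := by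
  induction xs generalizing A with
  | nil => exact h
  | cons r rs ih =>
    obtain ⟨_, _, H⟩ := exists_distinguished_smulCone Φ hΦ r A
    exact EventuallyNoShiftedHom.of_smul_triangle (hxs r List.mem_cons_self) H hfin
      (ih (fun x hx ↦ hxs x (List.mem_cons_of_mem _ hx)) (FiniteShiftedHom.obj₃ H hfin hfin) h)

theorem EventuallyNoShiftedHom.of_factorization [IsNoetherianRing R]
    (hΦ : ∀ (r : Q) (X : ModuleCat.{u} Q), Φ.map (r • 𝟙 X) = algebraMap Q R r • 𝟙 (Φ.obj X))
    {xs : List Q} (hreg : IsWeaklyRegular Q xs)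
    (hxs : ∀ x ∈ xs, algebraMap Q R x ∈ (⊥ : Ideal R).jacobson) {k : ModuleCat.{u} Q}
    (c : ModuleCat.of Q Q ⟶ k) (hc : Function.Surjective c)
    (hc' : LinearMap.ker c.hom = Ideal.ofList xs)
    {F : CochainComplex (ModuleCat.{u} Q) ℤ} [F.IsKProjective]
    (e : (CochainComplex.singleFunctor _ 0).obj (ModuleCat.of Q Q) ⟶ F)
    (a : F ⟶ (CochainComplex.singleFunctor _ 0).obj k)
    (hea : e ≫ a = (CochainComplex.singleFunctor _ 0).map c)
    (hfin : FiniteShiftedHom R L (DerivedCategory.Q.obj ((Φ.mapHomologicalComplex _).obj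
      ((CochainComplex.singleFunctor _ 0).obj (ModuleCat.of Q Q)))))
    (h : EventuallyNoShiftedHom L (DerivedCategory.Q.obj ((Φ.mapHomologicalComplex _).obj F))) :
    EventuallyNoShiftedHom L (DerivedCategory.Q.obj ((Φ.mapHomologicalComplex _).obj
      ((CochainComplex.singleFunctor _ 0).obj (ModuleCat.of Q Q)))) := by
  refine of_map_koszul Φ hΦ xs hxs hfin ?_
  have hk : ∀ x ∈ xs, x • 𝟙 ((CochainComplex.singleFunctor _ 0).obj k) = 0 := fun x hx ↦ by
    have : x • 𝟙 k = 0 := by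
      ext y
      obtain ⟨y, rfl⟩ := hc y
      have h1 : x ∈ LinearMap.ker c.hom := hc' ▸ Ideal.subset_span hx
      have h2 : c.hom (y * x) = 0 := by
        rw [← smul_eq_mul, map_smul, LinearMap.mem_ker.mp h1, smul_zero]
      rw [mul_comm, ← smul_eq_mul, map_smul] at h2
      exact h2
    rw [← CategoryTheory.Functor.map_id, ← CategoryTheory.Functor.map_smul, this,
      CategoryTheory.Functor.map_zero]
  have : Projective (ModuleCat.of Q Q) := inferInstance
  have : ((CochainComplex.singleFunctor (ModuleCat.{u} Q) 0).obj
    (ModuleCat.of Q Q)).IsKProjective := by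
    have (n : ℤ) : Projective (((CochainComplex.singleFunctor (ModuleCat.{u} Q) 0).obj
        (ModuleCat.of Q Q)).X n) := by
      by_cases hn : n = 0
      · subst hn
        exact Projective.of_iso
          (HomologicalComplex.singleObjXSelf (.up ℤ) 0 (ModuleCat.of Q Q)).symm inferInstance
      · exact (HomologicalComplex.isZero_single_obj_X (.up ℤ) 0 (ModuleCat.of Q Q) n hn).projective
    exact isKProjective_of_projective _ 0
  have := isKProjective_koszul xs ((CochainComplex.singleFunctor (ModuleCat.{u} Q) 0).obj
    (ModuleCat.of Q Q))
  have := isKProjective_koszul xs F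
  have : QuasiIso ((koszul xs).map e ≫ koszulDesc xs hk a) := by
    have := quasiIso_koszulDesc xs (B := ModuleCat.of Q Q) hreg (𝟙 _) c hc (by simp [hc']) hk
    rwa [Category.id_comp, ← hea, ← koszul_map_desc] at this
  obtain ⟨g, ⟨H⟩⟩ := exists_homotopy_retract ((koszul xs).map e) (koszulDesc xs hk a)
  refine of_retract
    (DerivedCategory.Q.map ((Φ.mapHomologicalComplex _).map ((koszul xs).map e)))
    (DerivedCategory.Q.map ((Φ.mapHomologicalComplex _).map g)) ?_ (map_koszul Φ hΦ xs h)
  rw [← CategoryTheory.Functor.map_comp, ← CategoryTheory.Functor.map_comp,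
    DerivedCategory.Q_map_eq_of_homotopy _ (Φ.mapHomotopy H), CategoryTheory.Functor.map_id,
    CategoryTheory.Functor.map_id]

end MapKoszul

section FreeComplex

/-- The coefficientwise reduction of finitely supported functions along an algebra map. -/
noncomputable abbrev finsuppRed (S R : Type*) [CommRing S] [CommRing R] [Algebra S R] (α : Type*) :
    (α →₀ S) →ₗ[S] (α →₀ R) :=
  Finsupp.mapRange.linearMap (Algebra.linearMap S R)

section Reduction

variable {S R : Type*} [CommRing S] [CommRing R] [Algebra S R] {α β : Type*}

theorem finsuppRed_surjective (h : Function.Surjective (algebraMap S R)) :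
    Function.Surjective (finsuppRed S R α) :=
  Finsupp.mapRange_surjective _ (map_zero _) h

theorem finsuppRed_smul (r : S) (x : α →₀ S) :
    finsuppRed S R α (r • x) = algebraMap S R r • finsuppRed S R α x := by
  rw [map_smul, algebraMap_smul]

theorem exists_finsupp_lift (h : Function.Surjective (algebraMap S R))
    (u : (α →₀ R) →ₗ[R] (β →₀ R)) :
    ∃ v : (α →₀ S) →ₗ[S] (β →₀ S), ∀ x, finsuppRed S R β (v x) = u (finsuppRed S R α x) := by
  obtain ⟨v, hv⟩ := Module.projective_lifting_property (finsuppRed S R β)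
    (u.restrictScalars S ∘ₗ finsuppRed S R α) (finsuppRed_surjective h)
  exact ⟨v, fun x ↦ LinearMap.congr_fun hv x⟩

theorem exists_finsupp_descend (v : (α →₀ S) →ₗ[S] (β →₀ S)) :
    ∃ u : (α →₀ R) →ₗ[R] (β →₀ R), ∀ x, finsuppRed S R β (v x) = u (finsuppRed S R α x) := by
  let u : (α →₀ R) →ₗ[R] (β →₀ R) :=
    Finsupp.linearCombination R fun i ↦ finsuppRed S R β (v (Finsupp.single i 1))
  refine ⟨u, fun x ↦ ?_⟩
  have : finsuppRed S R β ∘ₗ v = u.restrictScalars S ∘ₗ finsuppRed S R α := by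
    ext i : 2
    simp [u]
  exact LinearMap.congr_fun this x

theorem exists_eq_smul_of_finsuppRed_eq_zero {f : S}
    (hf : RingHom.ker (algebraMap S R) = Ideal.span {f}) (v : (α →₀ S) →ₗ[S] (β →₀ S))
    (hv : ∀ x, finsuppRed S R β (v x) = 0) : ∃ t : (α →₀ S) →ₗ[S] (β →₀ S), v = f • t := by
  classical
  have key (y : β →₀ S) (hy : finsuppRed S R β y = 0) : ∃ z, y = f • z := by
    have (b : β) : ∃ s, y b = f * s := by
      have : y b ∈ RingHom.ker (algebraMap S R) := DFunLike.congr_fun hy b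
      rw [hf] at this
      obtain ⟨s, hs⟩ := Ideal.mem_span_singleton'.mp this
      exact ⟨s, by rw [← hs, mul_comm]⟩
    choose s hs using this
    refine ⟨Finsupp.onFinset y.support (fun b ↦ if y b = 0 then 0 else s b)
      (fun b hb ↦ by simp_all), ?_⟩
    ext b
    by_cases hb : y b = 0
    · simp [hb]
    · simpa [hb] using hs b
  choose z hz using fun i ↦ key _ (hv (Finsupp.single i 1))
  refine ⟨Finsupp.linearCombination S z, ?_⟩
  ext i : 2
  simpa using hz i

end Reduction

variable {R : Type u} [CommRing R]

/-- A complex of free modules, concentrated in nonpositive degrees, with an augmentation. -/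
structure FreeComplex (R : Type u) [CommRing R] (k : Type*) [AddCommGroup k] [Module R k] where
  ι : ℤ → Type u
  isEmpty : ∀ n, 0 < n → IsEmpty (ι n)
  d : ∀ n, (ι n →₀ R) →ₗ[R] (ι (n + 1) →₀ R)
  d_comp_d : ∀ n x, d (n + 1) (d n x) = 0
  ε : (ι 0 →₀ R) →ₗ[R] k
  ε_surjective : Function.Surjective ε
  ε_d : ∀ x : ι (-1) →₀ R, ε (d (-1) x) = 0

namespace FreeComplex

variable {k : Type*} [AddCommGroup k] [Module R k] (P : FreeComplex R k)

/-- The cochain complex underlying an augmented complex of free modules. -/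
noncomputable def toComplex : CochainComplex (ModuleCat.{u} R) ℤ :=
  CochainComplex.of (fun n ↦ ModuleCat.of R (P.ι n →₀ R)) (fun n ↦ ModuleCat.ofHom (P.d n))
    fun n ↦ by
      ext1
      exact LinearMap.ext (P.d_comp_d n)

/-- The differential can be lifted along `S → R`. -/
def Lifts (S : Type*) [CommRing S] [Algebra S R] : Prop :=
  ∃ d : ∀ n, (P.ι n →₀ S) →ₗ[S] (P.ι (n + 1) →₀ S), (∀ n x, d (n + 1) (d n x) = 0) ∧
    ∀ n x, finsuppRed S R _ (d n x) = P.d n (finsuppRed S R _ x)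

/-- The linear map with matrix `(d, f; -t, -d')`. -/
def twistMap {S A B C : Type*} [CommRing S] [AddCommGroup A] [AddCommGroup B] [AddCommGroup C]
    [Module S A] [Module S B] [Module S C] (f : S) (d : A →ₗ[S] B) (d' : B →ₗ[S] C)
    (t : A →ₗ[S] C) : A × B →ₗ[S] B × C :=
  (d ∘ₗ .fst S A B + f • .snd S A B).prod (-(t ∘ₗ .fst S A B) - d' ∘ₗ .snd S A B)

theorem twistMap_apply {S A B C : Type*} [CommRing S] [AddCommGroup A] [AddCommGroup B]
    [AddCommGroup C] [Module S A] [Module S B] [Module S C] (f : S) (d : A →ₗ[S] B)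
    (d' : B →ₗ[S] C) (t : A →ₗ[S] C) (x : A × B) :
    twistMap f d d' t x = (d x.1 + f • x.2, -t x.1 - d' x.2) := rfl

/-- The differential of the twisted complex. -/
noncomputable def twistD {S : Type*} [CommRing S] {ι : ℤ → Type*} (f : S)
    (d : ∀ n, (ι n →₀ S) →ₗ[S] (ι (n + 1) →₀ S)) (t : ∀ n, (ι n →₀ S) →ₗ[S] (ι (n + 1 + 1) →₀ S))
    (n : ℤ) : (ι n ⊕ ι (n + 1) →₀ S) →ₗ[S] (ι (n + 1) ⊕ ι (n + 1 + 1) →₀ S) :=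
  (Finsupp.sumFinsuppLEquivProdFinsupp S).symm.toLinearMap ∘ₗ
    twistMap f (d n) (d (n + 1)) (t n) ∘ₗ (Finsupp.sumFinsuppLEquivProdFinsupp S).toLinearMap

theorem sumEquiv_twistD {S : Type*} [CommRing S] {ι : ℤ → Type*} (f : S)
    (d : ∀ n, (ι n →₀ S) →ₗ[S] (ι (n + 1) →₀ S)) (t : ∀ n, (ι n →₀ S) →ₗ[S] (ι (n + 1 + 1) →₀ S))
    (n : ℤ) (x : ι n ⊕ ι (n + 1) →₀ S) :
    Finsupp.sumFinsuppLEquivProdFinsupp S (twistD f d t n x) =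
      twistMap f (d n) (d (n + 1)) (t n) (Finsupp.sumFinsuppLEquivProdFinsupp S x) := by
  simp [twistD]

theorem twistD_twistD {S : Type*} [CommRing S] {ι : ℤ → Type*} {f : S}
    {d : ∀ n, (ι n →₀ S) →ₗ[S] (ι (n + 1) →₀ S)}
    {t : ∀ n, (ι n →₀ S) →ₗ[S] (ι (n + 1 + 1) →₀ S)}
    (hd : ∀ n x, d (n + 1) (d n x) = f • t n x)
    (ht : ∀ n x, t (n + 1) (d n x) = d (n + 1 + 1) (t n x)) (n : ℤ)
    (x : ι n ⊕ ι (n + 1) →₀ S) : twistD f d t (n + 1) (twistD f d t n x) = 0 := by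
  apply (Finsupp.sumFinsuppLEquivProdFinsupp S).injective
  rw [sumEquiv_twistD, sumEquiv_twistD, map_zero, twistMap_apply, twistMap_apply]
  ext1
  · simp only [map_add, hd, map_smul, Prod.fst_zero, smul_sub, smul_neg]
    abel
  · simp only [map_add, map_sub, map_neg, hd, ht, map_smul, Prod.snd_zero]
    abel

/-- The extension of `P` by its shift corresponding to an endomorphism of degree two. -/
noncomputable def twist (t : ∀ n, (P.ι n →₀ R) →ₗ[R] (P.ι (n + 1 + 1) →₀ R))
    (ht : ∀ n x, t (n + 1) (P.d n x) = P.d (n + 1 + 1) (t n x)) : FreeComplex R k where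
  ι n := P.ι n ⊕ P.ι (n + 1)
  isEmpty n hn := by
    have := P.isEmpty n hn
    have := P.isEmpty (n + 1) (by omega)
    infer_instance
  d := twistD 0 P.d t
  d_comp_d := twistD_twistD (by simp [P.d_comp_d]) ht
  ε := P.ε ∘ₗ LinearMap.fst R _ _ ∘ₗ (Finsupp.sumFinsuppLEquivProdFinsupp R).toLinearMap
  ε_surjective := by
    refine P.ε_surjective.comp (Prod.fst_surjective.comp (LinearEquiv.surjective _))
  ε_d x := by
    refine (congrArg (fun y ↦ P.ε y.1) (sumEquiv_twistD 0 P.d t (-1) x)).trans ?_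
    rw [twistMap_apply, zero_smul, add_zero]
    exact P.ε_d _

theorem fst_sumEquiv_finsuppRed {S : Type*} [CommRing S] [Algebra S R] {α β : Type*}
    (x : α ⊕ β →₀ S) :
    Finsupp.sumFinsuppLEquivProdFinsupp R (finsuppRed S R _ x) =
      (finsuppRed S R _ (Finsupp.sumFinsuppLEquivProdFinsupp S x).1,
       finsuppRed S R _ (Finsupp.sumFinsuppLEquivProdFinsupp S x).2) := by
  ext <;> simp

theorem Lifts.exists_twist {S S' : Type*} [CommRing S] [CommRing S'] [Algebra S S'] [Algebra S R]
    [Algebra S' R] [IsScalarTower S S' R] (hS : Function.Surjective (algebraMap S S'))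
    (hS' : Function.Surjective (algebraMap S' R)) {f : S} (hf : IsSMulRegular S f)
    (hker : RingHom.ker (algebraMap S S') = Ideal.span {f}) (h : P.Lifts S') :
    ∃ t ht, (P.twist t ht).Lifts S := by
  obtain ⟨d', hd', hdR⟩ := h
  choose d hd using fun n ↦ exists_finsupp_lift hS (d' n)
  choose t ht using fun n ↦ exists_eq_smul_of_finsuppRed_eq_zero hker (d (n + 1) ∘ₗ d n)
    (by simp only [LinearMap.comp_apply, hd, hd', implies_true])
  choose tR htR using fun n ↦ exists_finsupp_descend (R := R) (t n)
  have hdd (n x) : d (n + 1) (d n x) = f • t n x := LinearMap.congr_fun (ht n) x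
  have htd (n x) : t (n + 1) (d n x) = d (n + 1 + 1) (t n x) := by
    ext i
    apply hf
    have : f • t (n + 1) (d n x) = f • d (n + 1 + 1) (t n x) := by
      rw [← hdd, ← map_smul, ← hdd]
    exact DFunLike.congr_fun this i
  have hred {α : Type _} (x : α →₀ S) :
      finsuppRed S R α x = finsuppRed S' R α (finsuppRed S S' α x) := by
    ext i
    exact IsScalarTower.algebraMap_apply S S' R (x i)
  have hdR' (n x) : finsuppRed S R _ (d n x) = P.d n (finsuppRed S R _ x) := by
    rw [hred, hd, hdR, ← hred]
  have hf0 : algebraMap S R f = 0 := by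
    have : f ∈ RingHom.ker (algebraMap S S') := hker ▸ Ideal.mem_span_singleton_self f
    rw [IsScalarTower.algebraMap_apply S S' R, RingHom.mem_ker.mp this, map_zero]
  refine ⟨tR, fun n x ↦ ?_, twistD f d t, twistD_twistD hdd htd, fun n x ↦ ?_⟩
  · have hSR : Function.Surjective (algebraMap S R) := by
      rw [IsScalarTower.algebraMap_eq S S' R]
      exact hS'.comp hS
    obtain ⟨x, rfl⟩ := finsuppRed_surjective hSR x
    rw [← hdR', ← htR, ← htR, htd, hdR']
  · have key (x : P.ι n ⊕ P.ι (n + 1) →₀ S) : finsuppRed S R _ (twistD f d t n x) =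
        twistD 0 P.d tR n (finsuppRed S R _ x) := by
      apply (Finsupp.sumFinsuppLEquivProdFinsupp R).injective
      rw [fst_sumEquiv_finsuppRed, sumEquiv_twistD, sumEquiv_twistD, fst_sumEquiv_finsuppRed,
        twistMap_apply, twistMap_apply]
      ext1
      · simp only [map_add, hdR', finsuppRed_smul, hf0]
      · simp only [map_sub, map_neg, hdR', htR]
    exact key x

end FreeComplex

end FreeComplex

section TwistTriangle

namespace FreeComplex

variable {R : Type u} [CommRing R] {k : Type*} [AddCommGroup k] [Module R k] (P : FreeComplex R k)
  (t : ∀ n, (P.ι n →₀ R) →ₗ[R] (P.ι (n + 1 + 1) →₀ R))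
  (ht : ∀ n x, t (n + 1) (P.d n x) = P.d (n + 1 + 1) (t n x))

theorem toComplex_d (n : ℤ) : P.toComplex.d n (n + 1) = ModuleCat.ofHom (P.d n) :=
  CochainComplex.of_d (fun n ↦ ModuleCat.of R (P.ι n →₀ R)) (fun n ↦ ModuleCat.ofHom (P.d n)) n

theorem shift_toComplex_d (n : ℤ) :
    (P.toComplex⟦(1 : ℤ)⟧).d n (n + 1) = ModuleCat.ofHom (-P.d (n + 1)) := by
  refine (CochainComplex.shiftFunctor_obj_d' _ _ _ _).trans ?_
  rw [Int.negOnePow_one, Units.neg_smul, one_smul]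
  exact congrArg Neg.neg (P.toComplex_d (n + 1))

/-- The projection of the twisted complex. -/
noncomputable def twistProj : (P.twist t ht).toComplex ⟶ P.toComplex where
  f n := ModuleCat.ofHom
    (LinearMap.fst R _ _ ∘ₗ (Finsupp.sumFinsuppLEquivProdFinsupp R).toLinearMap :
      (P.ι n ⊕ P.ι (n + 1) →₀ R) →ₗ[R] _)
  comm' := by
    rintro n _ rfl
    rw [toComplex_d, toComplex_d]
    ext1
    refine LinearMap.ext fun x ↦ ?_
    have := congrArg Prod.fst (sumEquiv_twistD 0 P.d t n x)
    rw [twistMap_apply, zero_smul, add_zero] at this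
    exact this.symm

/-- The inclusion of the shift in the twisted complex. -/
noncomputable def twistIncl : P.toComplex⟦(1 : ℤ)⟧ ⟶ (P.twist t ht).toComplex where
  f n := ModuleCat.ofHom
    ((Finsupp.sumFinsuppLEquivProdFinsupp R).symm.toLinearMap ∘ₗ LinearMap.inr R _ _ :
      _ →ₗ[R] (P.ι n ⊕ P.ι (n + 1) →₀ R))
  comm' := by
    rintro n _ rfl
    rw [toComplex_d, shift_toComplex_d]
    ext1
    refine LinearMap.ext fun x ↦ ?_
    apply (Finsupp.sumFinsuppLEquivProdFinsupp R).injective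
    refine (sumEquiv_twistD 0 P.d t n _).trans ?_
    have h₁ := (Finsupp.sumFinsuppLEquivProdFinsupp R).apply_symm_apply
      ((0, x) : (P.ι n →₀ R) × (P.ι (n + 1) →₀ R))
    have h₂ := (Finsupp.sumFinsuppLEquivProdFinsupp R).apply_symm_apply
      ((0, -P.d (n + 1) x) : (P.ι (n + 1) →₀ R) × (P.ι (n + 1 + 1) →₀ R))
    refine (congrArg (twistMap 0 (P.d n) (P.d (n + 1)) (t n)) h₁).trans (Eq.trans ?_ h₂.symm)
    simp [twistMap_apply]
    exact zero_smul R (show P.ι (n + 1) →₀ R from x)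

/-- The short complex given by the twisted complex. -/
noncomputable def twistShortComplex : ShortComplex (CochainComplex (ModuleCat.{u} R) ℤ) :=
  ShortComplex.mk (P.twistIncl t ht) (P.twistProj t ht) <| by
    ext1 n
    ext1
    refine LinearMap.ext fun x ↦ ?_
    exact congrArg Prod.fst
      ((Finsupp.sumFinsuppLEquivProdFinsupp R).apply_symm_apply
        ((0, x) : (P.ι n →₀ R) × (P.ι (n + 1) →₀ R)))

/-- The short complex given by the twisted complex is degreewise split. -/
noncomputable def twistSplitting (n : ℤ) :
    ((P.twistShortComplex t ht).map (HomologicalComplex.eval _ _ n)).Splitting where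
  r := ModuleCat.ofHom
    (LinearMap.snd R _ _ ∘ₗ (Finsupp.sumFinsuppLEquivProdFinsupp R).toLinearMap :
      (P.ι n ⊕ P.ι (n + 1) →₀ R) →ₗ[R] _)
  s := ModuleCat.ofHom
    ((Finsupp.sumFinsuppLEquivProdFinsupp R).symm.toLinearMap ∘ₗ LinearMap.inl R _ _ :
      _ →ₗ[R] (P.ι n ⊕ P.ι (n + 1) →₀ R))
  f_r := by
    ext1
    refine LinearMap.ext fun x ↦ ?_
    exact congrArg Prod.snd
      ((Finsupp.sumFinsuppLEquivProdFinsupp R).apply_symm_apply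
        ((0, x) : (P.ι n →₀ R) × (P.ι (n + 1) →₀ R)))
  s_g := by
    ext1
    refine LinearMap.ext fun x ↦ ?_
    exact congrArg Prod.fst
      ((Finsupp.sumFinsuppLEquivProdFinsupp R).apply_symm_apply
        ((x, 0) : (P.ι n →₀ R) × (P.ι (n + 1) →₀ R)))
  id := by
    ext1
    refine LinearMap.ext fun x ↦ ?_
    apply (Finsupp.sumFinsuppLEquivProdFinsupp R).injective
    have h₁ := (Finsupp.sumFinsuppLEquivProdFinsupp R).apply_symm_apply
      ((0, (Finsupp.sumFinsuppLEquivProdFinsupp R x).2) : (P.ι n →₀ R) × (P.ι (n + 1) →₀ R))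
    have h₂ := (Finsupp.sumFinsuppLEquivProdFinsupp R).apply_symm_apply
      (((Finsupp.sumFinsuppLEquivProdFinsupp R x).1, 0) : (P.ι n →₀ R) × (P.ι (n + 1) →₀ R))
    refine (map_add (Finsupp.sumFinsuppLEquivProdFinsupp R) _ _).trans
      ((congrArg₂ (· + ·) h₁ h₂).trans ?_)
    exact Prod.ext (zero_add _) (add_zero _)

theorem eventuallyNoShiftedHom_twist {D : Type*} [Category* D] [Abelian D] [HasDerivedCategory D]
    {L : DerivedCategory D}
    (Ψ : ModuleCat.{u} R ⥤ D) [Ψ.Additive]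
    (h : EventuallyNoShiftedHom L
      (DerivedCategory.Q.obj ((Ψ.mapHomologicalComplex _).obj P.toComplex))) :
    EventuallyNoShiftedHom L
      (DerivedCategory.Q.obj ((Ψ.mapHomologicalComplex _).obj (P.twist t ht).toComplex)) := by
  have hS : ((P.twistShortComplex t ht).map (Ψ.mapHomologicalComplex (.up ℤ))).ShortExact :=
    HomologicalComplex.shortExact_of_degreewise_shortExact _ fun n ↦
      ((P.twistSplitting t ht n).map Ψ).shortExact
  refine EventuallyNoShiftedHom.obj₂ (DerivedCategory.triangleOfSES_distinguished hS) ?_ h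
  refine h.shift.of_iso (((DerivedCategory.Q.commShiftIso (1 : ℤ)).app _).symm ≪≫
    DerivedCategory.Q.mapIso (((Ψ.mapHomologicalComplex (.up ℤ)).commShiftIso (1 : ℤ)).app _).symm)

end FreeComplex

end TwistTriangle

section ExistsLifts

open RingTheory.Sequence

theorem isWeaklyRegular_cons_iff_quotient {S : Type*} [CommRing S] (f : S) (fs : List S) :
    IsWeaklyRegular S (f :: fs) ↔ IsSMulRegular S f ∧
      IsWeaklyRegular (S ⧸ Ideal.span {f}) (fs.map (algebraMap S (S ⧸ Ideal.span {f}))) := by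
  rw [isWeaklyRegular_cons_iff, isWeaklyRegular_map_algebraMap_iff]
  refine and_congr_right' (LinearEquiv.isWeaklyRegular_congr
    (Submodule.quotEquivOfEq _ _ ?_) fs)
  rw [← Submodule.ideal_span_singleton_smul, smul_eq_mul, Ideal.mul_top]

namespace FreeComplex

variable {R : Type u} [CommRing R] {k : Type*} [AddCommGroup k] [Module R k]

theorem lifts_of_bijective (P : FreeComplex R k) {S : Type*} [CommRing S] [Algebra S R]
    (h : Function.Bijective (algebraMap S R)) : P.Lifts S := by
  have hinj {α : Type u} : Function.Injective (finsuppRed S R α) :=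
    Finsupp.mapRange_injective _ (map_zero _) h.1
  choose d hd using fun n ↦ exists_finsupp_lift h.2 (P.d n)
  refine ⟨d, fun n x ↦ hinj ?_, hd⟩
  rw [hd, hd, P.d_comp_d, map_zero]

theorem exists_lifts {D : Type*} [Category* D] [Abelian D] [HasDerivedCategory D]
    {L : DerivedCategory D} (Ψ : ModuleCat.{u} R ⥤ D) [Ψ.Additive] (P : FreeComplex R k)
    (h : EventuallyNoShiftedHom L
      (DerivedCategory.Q.obj ((Ψ.mapHomologicalComplex _).obj P.toComplex)))
    {S : Type*} [CommRing S] [Algebra S R] (hS : Function.Surjective (algebraMap S R))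
    {fs : List S} (hker : RingHom.ker (algebraMap S R) = Ideal.ofList fs)
    (hfs : IsWeaklyRegular S fs) :
    ∃ P' : FreeComplex R k, P'.Lifts S ∧ EventuallyNoShiftedHom L
      (DerivedCategory.Q.obj ((Ψ.mapHomologicalComplex _).obj P'.toComplex)) := by
  obtain ⟨m, hm⟩ : ∃ m, fs.length = m := ⟨_, rfl⟩
  induction m generalizing S with
  | zero =>
    obtain rfl := List.length_eq_zero_iff.mp hm
    rw [Ideal.ofList_nil] at hker
    exact ⟨P, P.lifts_of_bijective ⟨(RingHom.injective_iff_ker_eq_bot _).mpr hker, hS⟩, h⟩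
  | succ m ih =>
    obtain ⟨f, fs, rfl⟩ := List.exists_cons_of_length_eq_add_one hm
    obtain ⟨hf, hfs⟩ := (isWeaklyRegular_cons_iff_quotient f fs).mp hfs
    let S' := S ⧸ Ideal.span {f}
    rw [Ideal.ofList_cons] at hker
    have hle : ∀ a ∈ Ideal.span {f}, algebraMap S R a = 0 := fun a ha ↦ by
      rw [← RingHom.mem_ker, hker]
      exact Ideal.mem_sup_left ha
    let φ : S' →+* R := Ideal.Quotient.lift _ (algebraMap S R) hle
    let _ : Algebra S' R := φ.toAlgebra
    have : IsScalarTower S S' R := .of_algebraMap_eq fun _ ↦ rfl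
    have hφ : Function.Surjective (algebraMap S' R) :=
      Ideal.Quotient.lift_surjective_of_surjective _ _ hS
    have hker' : RingHom.ker (algebraMap S' R) = Ideal.ofList (fs.map (algebraMap S S')) := by
      rw [← Ideal.map_ofList]
      refine (Ideal.ker_quotient_lift _ hle).trans ?_
      rw [hker, Ideal.map_sup, Ideal.map_quotient_self, bot_sup_eq]
      rfl
    obtain ⟨P', hP', h'⟩ := ih hφ hker' hfs (by simpa using hm)
    obtain ⟨t, ht, hl⟩ := hP'.exists_twist P' Ideal.Quotient.mk_surjective hφ hf Ideal.mk_ker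
    exact ⟨_, hl, P'.eventuallyNoShiftedHom_twist t ht Ψ h'⟩

end FreeComplex

end ExistsLifts

section BaseChange

open TensorProduct RingTheory.Sequence

theorem mkHomFromSingle_comp_mkHomToSingle {V : Type*} [Category* V] [HasZeroMorphisms V]
    [HasZeroObject V] {ι : Type*} [DecidableEq ι] {c : ComplexShape ι} {j : ι}
    {K : HomologicalComplex V c} {A B : V} (φ : A ⟶ K.X j)
    (hφ : ∀ (k : ι), c.Rel j k → φ ≫ K.d j k = 0) (ψ : K.X j ⟶ B)
    (hψ : ∀ (i : ι), c.Rel i j → K.d i j ≫ ψ = 0) :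
    HomologicalComplex.mkHomFromSingle φ hφ ≫ HomologicalComplex.mkHomToSingle ψ hψ =
      (HomologicalComplex.single V c j).map (φ ≫ ψ) := by
  apply HomologicalComplex.from_single_hom_ext
  rw [HomologicalComplex.comp_f, HomologicalComplex.mkHomFromSingle_f,
    HomologicalComplex.mkHomToSingle_f, HomologicalComplex.single_map_f_self]
  simp

/-- Base change of modules along an algebra, as a functor. -/
@[simps]
noncomputable def baseChangeFunctor (Q R : Type u) [CommRing Q] [CommRing R] [Algebra Q R] :
    ModuleCat.{u} Q ⥤ ModuleCat.{u} R where
  obj X := ModuleCat.of R (R ⊗[Q] X)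
  map f := ModuleCat.ofHom (f.hom.baseChange R)
  map_id X := by
    ext1
    exact LinearMap.baseChange_id
  map_comp f g := by
    ext1
    exact LinearMap.baseChange_comp _ _

variable {Q R : Type u} [CommRing Q] [CommRing R] [Algebra Q R]

instance : (baseChangeFunctor Q R).Additive where
  map_add {X Y f g} := by
    ext1
    exact LinearMap.baseChange_add _ _

theorem baseChangeFunctor_map_smul (r : Q) {X Y : ModuleCat.{u} Q} (f : X ⟶ Y) :
    (baseChangeFunctor Q R).map (r • f) = algebraMap Q R r • (baseChangeFunctor Q R).map f := by
  ext1
  refine (LinearMap.baseChange_smul r f.hom).trans (LinearMap.ext fun x ↦ ?_)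
  exact (algebraMap_smul R r _).symm

open Classical in
/-- The base change of a free module. -/
noncomputable def baseChangeFinsuppIso (α : Type u) :
    (baseChangeFunctor Q R).obj (ModuleCat.of Q (α →₀ Q)) ≅ ModuleCat.of R (α →₀ R) :=
  (finsuppScalarRight Q R R α).toModuleIso

theorem baseChangeFinsuppIso_tmul {α : Type u} (x : α →₀ Q) :
    (baseChangeFinsuppIso (R := R) α).hom (1 ⊗ₜ x) = finsuppRed Q R α x := by
  ext i
  classical
  refine (finsuppScalarRight_apply_tmul_apply (S := R) (1 : R) x i).trans ?_
  simp [Algebra.smul_def]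

theorem baseChangeFinsuppIso_naturality {α β : Type u} {v : (α →₀ Q) →ₗ[Q] (β →₀ Q)}
    {w : (α →₀ R) →ₗ[R] (β →₀ R)} (h : ∀ x, finsuppRed Q R β (v x) = w (finsuppRed Q R α x)) :
    (baseChangeFunctor Q R).map (ModuleCat.ofHom v) ≫ (baseChangeFinsuppIso β).hom =
      (baseChangeFinsuppIso α).hom ≫ ModuleCat.ofHom w := by
  ext1
  refine TensorProduct.AlgebraTensorModule.curry_injective ?_
  refine LinearMap.ext_ring (LinearMap.ext fun x ↦ ?_)
  refine Eq.trans ?_ ((h x).trans (congrArg w (baseChangeFinsuppIso_tmul x).symm))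
  exact baseChangeFinsuppIso_tmul (v x)

variable {κ : Type u} [CommRing κ] [Algebra Q κ] [Algebra R κ] [IsScalarTower Q R κ]

theorem FreeComplex.eventuallyNoShiftedHom_single [IsNoetherianRing R]
    [HasDerivedCategory (ModuleCat.{u} R)]
    {L : DerivedCategory (ModuleCat.{u} R)} (P : FreeComplex R κ) (hP : P.Lifts Q)
    (hQR : Function.Surjective (algebraMap Q R))
    {xs : List Q} (hreg : IsWeaklyRegular Q xs)
    (hxs : ∀ x ∈ xs, algebraMap Q R x ∈ (⊥ : Ideal R).jacobson)
    (hκ : Function.Surjective (algebraMap Q κ))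
    (hker : RingHom.ker (algebraMap Q κ) = Ideal.ofList xs)
    (M : ModuleCat.{u} R)
    (hfin : FiniteShiftedHom R L ((DerivedCategory.singleFunctor _ 0).obj M))
    (h : EventuallyNoShiftedHom L (DerivedCategory.Q.obj
      (((MonoidalCategory.tensorLeft M).mapHomologicalComplex _).obj P.toComplex))) :
    EventuallyNoShiftedHom L ((DerivedCategory.singleFunctor _ 0).obj M) := by
  obtain ⟨d, hd, hred⟩ := hP
  let F : CochainComplex (ModuleCat.{u} Q) ℤ :=
    CochainComplex.of (fun n ↦ ModuleCat.of Q (P.ι n →₀ Q)) (fun n ↦ ModuleCat.ofHom (d n))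
      fun n ↦ by
        ext1
        exact LinearMap.ext (hd n)
  have hFd (n : ℤ) : F.d n (n + 1) = ModuleCat.ofHom (d n) :=
    CochainComplex.of_d (fun n ↦ ModuleCat.of Q (P.ι n →₀ Q)) (fun n ↦ ModuleCat.ofHom (d n)) n
  have hF0 (n : ℤ) (hn : 0 < n) : IsZero (F.X n) := by
    have := P.isEmpty n hn
    exact ModuleCat.isZero_of_subsingleton (ModuleCat.of Q (P.ι n →₀ Q))
  have : F.IsStrictlyLE 0 := (CochainComplex.isStrictlyLE_iff F 0).mpr hF0
  have (n : ℤ) : Projective (F.X n) := by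
    have : Module.Projective Q (P.ι n →₀ Q) := inferInstance
    exact (IsProjective.iff_projective (R := Q) (P.ι n →₀ Q)).mp this
  have : F.IsKProjective := CochainComplex.isKProjective_of_projective F 0
  let Φ := baseChangeFunctor Q R ⋙ MonoidalCategory.tensorLeft M
  have hΦ (r : Q) (X : ModuleCat.{u} Q) :
      Φ.map (r • 𝟙 X) = algebraMap Q R r • 𝟙 (Φ.obj X) := by
    simp only [Φ, CategoryTheory.Functor.comp_map, baseChangeFunctor_map_smul,
      CategoryTheory.Functor.map_id, CategoryTheory.Functor.map_smul]
    rfl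
  let eF : ((baseChangeFunctor Q R).mapHomologicalComplex _).obj F ≅ P.toComplex :=
    HomologicalComplex.Hom.isoOfComponents (fun n ↦ baseChangeFinsuppIso (P.ι n)) <| by
      rintro n _ rfl
      rw [P.toComplex_d]
      refine (baseChangeFinsuppIso_naturality (hred n)).symm.trans ?_
      rw [← hFd]
      rfl
  obtain ⟨y, hy⟩ := P.ε_surjective 1
  obtain ⟨y, rfl⟩ := finsuppRed_surjective hQR y
  let φ : ModuleCat.of Q Q ⟶ F.X 0 := ModuleCat.ofHom (LinearMap.toSpanSingleton Q (P.ι 0 →₀ Q) y)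
  let ψ : F.X 0 ⟶ ModuleCat.of Q κ :=
    ModuleCat.ofHom (P.ε.restrictScalars Q ∘ₗ finsuppRed Q R (P.ι 0))
  have hφψ (q : Q) : (φ ≫ ψ) q = algebraMap Q κ q := by
    have : P.ε (finsuppRed Q R (P.ι 0) (q • y)) = algebraMap Q κ q := by
      rw [finsuppRed_smul, map_smul, hy, algebraMap_smul, Algebra.algebraMap_eq_smul_one]
    exact this
  have hψ (i : ℤ) (hi : (ComplexShape.up ℤ).Rel i 0) : F.d i 0 ≫ ψ = 0 := by
    obtain rfl : i = -1 := by
      have : i + 1 = 0 := hi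
      omega
    have h1 : F.d (-1) 0 = ModuleCat.ofHom (d (-1)) := hFd (-1)
    rw [h1]
    ext1
    exact LinearMap.ext fun x ↦ (congrArg P.ε (hred (-1) x)).trans (P.ε_d _)
  have hφ (i : ℤ) (hi : (ComplexShape.up ℤ).Rel 0 i) : φ ≫ F.d 0 i = 0 :=
    (hF0 i (by have : 0 + 1 = i := hi; omega)).eq_of_tgt _ _
  let eM : DerivedCategory.Q.obj ((Φ.mapHomologicalComplex (.up ℤ)).obj
      ((CochainComplex.singleFunctor _ 0).obj (ModuleCat.of Q Q))) ≅
      (DerivedCategory.singleFunctor _ 0).obj M :=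
    DerivedCategory.Q.mapIso ((HomologicalComplex.singleMapHomologicalComplex Φ (.up ℤ) 0).app _ ≪≫
      (HomologicalComplex.single _ _ 0).mapIso
        ((MonoidalCategory.tensorLeft M).mapIso
          (AlgebraTensorModule.rid Q R R).toModuleIso ≪≫ MonoidalCategory.rightUnitor M)) ≪≫
      ((DerivedCategory.singleFunctorIsoCompQ _ 0).app M).symm
  refine EventuallyNoShiftedHom.of_iso eM ?_
  refine EventuallyNoShiftedHom.of_factorization Φ hΦ hreg hxs (φ ≫ ψ)
    (fun z ↦ ?_) ?_ (F := F) (HomologicalComplex.mkHomFromSingle φ hφ)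
    (HomologicalComplex.mkHomToSingle ψ hψ) ?_ (hfin.of_iso eM.symm)
    (h.of_iso (DerivedCategory.Q.mapIso
      (((MonoidalCategory.tensorLeft M).mapHomologicalComplex _).mapIso eF.symm)))
  · obtain ⟨q, hq⟩ := hκ z
    exact ⟨q, (hφψ q).trans hq⟩
  · ext q
    rw [← hker, LinearMap.mem_ker, RingHom.mem_ker]
    exact (hφψ q).congr_left
  · exact mkHomFromSingle_comp_mkHomToSingle φ hφ ψ hψ

end BaseChange

section Syzygy

variable {R : Type u} [CommRing R] (N : ModuleCat.{u} R)

/-- The syzygies in the standard free resolution of a module. -/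
noncomputable def syzygy : ℕ → ModuleCat.{u} R
  | 0 => N
  | n + 1 => ModuleCat.of R
      (LinearMap.ker (Finsupp.linearCombination R (id : syzygy n → syzygy n)))

/-- The free cover of a syzygy. -/
noncomputable def syzygyCover (n : ℕ) : (syzygy N n →₀ R) →ₗ[R] syzygy N n :=
  Finsupp.linearCombination R id

theorem syzygyCover_surjective (n : ℕ) : Function.Surjective (syzygyCover N n) := fun x ↦
  ⟨Finsupp.single x 1, by simp [syzygyCover]⟩

/-- The inclusion of a syzygy. -/
noncomputable def syzygyIncl (n : ℕ) : syzygy N (n + 1) →ₗ[R] (syzygy N n →₀ R) :=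
  (LinearMap.ker (syzygyCover N n)).subtype

theorem syzygyIncl_injective (n : ℕ) : Function.Injective (syzygyIncl N n) :=
  Subtype.val_injective

theorem exact_syzygyIncl_syzygyCover (n : ℕ) :
    Function.Exact (syzygyIncl N n) (syzygyCover N n) :=
  LinearMap.exact_subtype_ker_map _

/-- The differential in the standard free resolution of a module. -/
noncomputable def syzygyD (n : ℕ) : (syzygy N (n + 1) →₀ R) →ₗ[R] (syzygy N n →₀ R) :=
  syzygyIncl N n ∘ₗ syzygyCover N (n + 1)

theorem exact_syzygyD_syzygyCover : Function.Exact (syzygyD N 0) (syzygyCover N 0) :=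
  (Function.Surjective.comp_exact_iff_exact (syzygyCover_surjective N 1)).mpr
    (exact_syzygyIncl_syzygyCover N 0)

theorem exact_syzygyD (n : ℕ) : Function.Exact (syzygyD N (n + 1)) (syzygyD N n) := by
  refine (Function.Surjective.comp_exact_iff_exact (syzygyCover_surjective N (n + 2))).mpr ?_
  exact (Function.Injective.comp_exact_iff_exact (syzygyIncl_injective N n)).mpr
    (exact_syzygyIncl_syzygyCover N (n + 1))

/-- Two consecutive differentials in the standard free resolution. -/
noncomputable def syzygyShortComplex (n : ℕ) : ShortComplex (ModuleCat.{u} R) :=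
  ShortComplex.mk (ModuleCat.ofHom (syzygyD N (n + 1))) (ModuleCat.ofHom (syzygyD N n)) <| by
    ext1
    exact (exact_syzygyD N n).linearMap_comp_eq_zero

/-- The augmentation of the standard free resolution. -/
noncomputable def syzygyAugmentation : ShortComplex (ModuleCat.{u} R) :=
  ShortComplex.mk (ModuleCat.ofHom (syzygyD N 0)) (ModuleCat.ofHom (syzygyCover N 0) :
    ModuleCat.of R (syzygy N 0 →₀ R) ⟶ N) <| by
    ext1
    exact (exact_syzygyD_syzygyCover N).linearMap_comp_eq_zero

theorem syzygyAugmentation_exact : (syzygyAugmentation N).Exact :=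
  (ShortComplex.ShortExact.moduleCat_exact_iff_function_exact _).mpr (exact_syzygyD_syzygyCover N)

instance : Epi (syzygyAugmentation N).g :=
  (ModuleCat.epi_iff_surjective _).mpr (syzygyCover_surjective N 0)

/-- The standard free resolution of a module, as a chain complex. -/
noncomputable def syzygyComplex : ChainComplex (ModuleCat.{u} R) ℕ :=
  ChainComplex.of (fun n ↦ ModuleCat.of R (syzygy N n →₀ R)) (fun n ↦ ModuleCat.ofHom (syzygyD N n))
    fun n ↦ (syzygyShortComplex N n).zero

theorem syzygyComplex_d (n : ℕ) :
    (syzygyComplex N).d (n + 1) n = ModuleCat.ofHom (syzygyD N n) :=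
  ChainComplex.of_d (fun n ↦ ModuleCat.of R (syzygy N n →₀ R))
    (fun n ↦ ModuleCat.ofHom (syzygyD N n)) n

theorem syzygyComplex_d_comp :
    (syzygyComplex N).d 1 0 ≫ (syzygyAugmentation N).g = 0 := by
  rw [syzygyComplex_d]
  exact (syzygyAugmentation N).zero

/-- Short complexes in the image of the standard free resolution. -/
noncomputable def syzygyComplexScIso {D : Type*} [Category* D] [Preadditive D]
    (Ψ : ModuleCat.{u} R ⥤ D) [Ψ.Additive] (n : ℕ) :
    ((Ψ.mapHomologicalComplex _).obj (syzygyComplex N)).sc' (n + 1 + 1) (n + 1) n ≅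
      (syzygyShortComplex N n).map Ψ :=
  ShortComplex.isoMk (Iso.refl _) (Iso.refl _) (Iso.refl _)
    (by
      refine (Category.id_comp _).trans (Eq.trans ?_ (Category.comp_id _).symm)
      exact congrArg Ψ.map (syzygyComplex_d N (n + 1)).symm)
    (by
      refine (Category.id_comp _).trans (Eq.trans ?_ (Category.comp_id _).symm)
      exact congrArg Ψ.map (syzygyComplex_d N n).symm)

/-- The standard free resolution of a module, as a projective resolution. -/
noncomputable def syzygyResolution : ProjectiveResolution N where
  complex := syzygyComplex N
  projective n := (IsProjective.iff_projective (R := R) (syzygy N n →₀ R)).mp inferInstance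
  π := (ChainComplex.toSingle₀Equiv (syzygyComplex N) N).symm ⟨(syzygyAugmentation N).g,
    syzygyComplex_d_comp N⟩
  quasiIso := ⟨fun n ↦ by
    cases n with
    | zero =>
      rw [ChainComplex.quasiIsoAt₀_iff, ShortComplex.quasiIso_iff_of_zeros']
      · refine (ShortComplex.exact_and_epi_g_iff_of_iso ?_).2
          ⟨syzygyAugmentation_exact N, inferInstance⟩
        exact ShortComplex.isoMk (Iso.refl _) (Iso.refl _) (Iso.refl _)
          (by
            refine (Category.id_comp _).trans (Eq.trans ?_ (Category.comp_id _).symm)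
            exact (syzygyComplex_d N 0).symm)
          (by
            refine (Category.id_comp _).trans (Eq.trans ?_ (Category.comp_id _).symm)
            exact (ChainComplex.toSingle₀Equiv_symm_apply_f_zero (C := syzygyComplex N) (X := N)
              (syzygyAugmentation N).g (syzygyComplex_d_comp N)).symm)
      all_goals rfl
    | succ n =>
      rw [quasiIsoAt_iff_exactAt']
      · rw [HomologicalComplex.exactAt_iff' _ (n + 1 + 1) (n + 1) n (by simp) (by simp)]
        exact ShortComplex.exact_of_iso (syzygyComplexScIso N (𝟭 _) n).symm
          ((ShortComplex.ShortExact.moduleCat_exact_iff_function_exact _).mpr (exact_syzygyD N n))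
      · apply ChainComplex.exactAt_succ_single_obj⟩

theorem exact_map_syzygyShortComplex {D : Type*} [Category* D] [Abelian D]
    (Ψ : ModuleCat.{u} R ⥤ D) [Ψ.Additive] (n : ℕ) (h : IsZero ((Ψ.leftDerived (n + 1)).obj N)) :
    ((syzygyShortComplex N n).map Ψ).Exact := by
  have h1 := h.of_iso ((syzygyResolution N).isoLeftDerivedObj Ψ (n + 1)).symm
  have h2 := (HomologicalComplex.exactAt_iff_isZero_homology _ _).mpr h1
  rw [HomologicalComplex.exactAt_iff' _ (n + 1 + 1) (n + 1) n (by simp) (by simp)] at h2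
  exact ShortComplex.exact_of_iso (syzygyComplexScIso N Ψ n) h2

end Syzygy

section SyzygyFreeComplex

theorem nonempty_iso_singleFunctor_of_exactAt {C : Type*} [Category* C] [Abelian C]
    [HasDerivedCategory C] {K : CochainComplex C ℤ} (h : ∀ i, i ≠ 0 → K.ExactAt i) {A : C}
    (e : K.homology 0 ≅ A) :
    Nonempty (DerivedCategory.Q.obj K ≅ (DerivedCategory.singleFunctor C 0).obj A) := by
  have : (DerivedCategory.Q.obj K).IsGE 0 := by
    rw [DerivedCategory.isGE_Q_obj_iff, CochainComplex.isGE_iff]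
    exact fun i hi ↦ h i hi.ne
  have : (DerivedCategory.Q.obj K).IsLE 0 := by
    rw [DerivedCategory.isLE_Q_obj_iff, CochainComplex.isLE_iff]
    exact fun i hi ↦ h i hi.ne'
  obtain ⟨B, ⟨eB⟩⟩ :=
    DerivedCategory.exists_iso_singleFunctor_obj_of_isGE_of_isLE (DerivedCategory.Q.obj K) 0
  let eBA : B ≅ A :=
    ((HomologicalComplex.homologyFunctorSingleIso C (.up ℤ) 0).app B).symm ≪≫
      ((DerivedCategory.homologyFunctorFactors C 0).app
        ((HomologicalComplex.single C (.up ℤ) 0).obj B)).symm ≪≫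
      (DerivedCategory.homologyFunctor C 0).mapIso
        (((DerivedCategory.singleFunctorIsoCompQ C 0).app B).symm ≪≫ eB.symm) ≪≫
      (DerivedCategory.homologyFunctorFactors C 0).app K ≪≫ e
  exact ⟨eB ≪≫ (DerivedCategory.singleFunctor C 0).mapIso eBA⟩

variable {R : Type u} [CommRing R] (N : ModuleCat.{u} R)

/-- The index sets of the bases in the standard free resolution. -/
def syzygyIndex : ℤ → Type u
  | .ofNat 0 => syzygy N 0
  | .ofNat (_ + 1) => PEmpty
  | .negSucc n => syzygy N (n + 1)

/-- The standard free resolution of a module, with cohomological indexing. -/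
noncomputable def syzygyIndexD : ∀ n, (syzygyIndex N n →₀ R) →ₗ[R] (syzygyIndex N (n + 1) →₀ R)
  | .ofNat _ => 0
  | .negSucc 0 => syzygyD N 0
  | .negSucc (n + 1) => syzygyD N (n + 1)

/-- The standard free resolution of a module as an augmented complex of free modules. -/
noncomputable def syzygyFreeComplex {k : Type*} [AddCommGroup k] [Module R k] {p : N →ₗ[R] k}
    (hp : Function.Surjective p) : FreeComplex R k where
  ι := syzygyIndex N
  isEmpty
    | .ofNat (_ + 1), _ => inferInstanceAs (IsEmpty PEmpty)
  d := syzygyIndexD N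
  d_comp_d
    | .ofNat _, _ => rfl
    | .negSucc 0, _ => rfl
    | .negSucc 1, x => (exact_syzygyD N 0).apply_apply_eq_zero x
    | .negSucc (n + 2), x => (exact_syzygyD N (n + 1)).apply_apply_eq_zero x
  ε := p ∘ₗ syzygyCover N 0
  ε_surjective := hp.comp (syzygyCover_surjective N 0)
  ε_d x := (congrArg p ((exact_syzygyD_syzygyCover N).apply_apply_eq_zero x)).trans (map_zero p)

variable {k : Type*} [AddCommGroup k] [Module R k] {p : N →ₗ[R] k}
    (hp : Function.Surjective p) {D : Type*} [Category* D] [Abelian D]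
    (Ψ : ModuleCat.{u} R ⥤ D) [Ψ.Additive]

theorem isZero_map_syzygyFreeComplex_X (n : ℤ) (hn : 0 < n) :
    IsZero (((Ψ.mapHomologicalComplex (.up ℤ)).obj (syzygyFreeComplex N hp).toComplex).X n) := by
  have := (syzygyFreeComplex N hp).isEmpty n hn
  have h : Subsingleton ((syzygyFreeComplex N hp).ι n →₀ R) := inferInstance
  exact Ψ.map_isZero (@ModuleCat.isZero_of_subsingleton R _ (ModuleCat.of R _) h)

theorem exactAt_map_syzygyFreeComplex (h : ∀ n, 0 < n → IsZero ((Ψ.leftDerived n).obj N)) (i : ℤ)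
    (hi : i ≠ 0) :
    ((Ψ.mapHomologicalComplex _).obj (syzygyFreeComplex N hp).toComplex).ExactAt i := by
  match i, hi with
  | .ofNat (n + 1), _ =>
    exact ShortComplex.exact_of_isZero_X₂ _
      (isZero_map_syzygyFreeComplex_X N hp Ψ _ (Int.natCast_succ_pos n))
  | .negSucc n, _ =>
    rw [HomologicalComplex.exactAt_iff' _ (Int.negSucc (n + 1)) (Int.negSucc n) (Int.negSucc n + 1)
      (by simp) (by simp)]
    refine ShortComplex.exact_of_iso ?_ (exact_map_syzygyShortComplex N Ψ n (h _ n.succ_pos))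
    have h1 : (syzygyFreeComplex N hp).toComplex.d (Int.negSucc (n + 1)) (Int.negSucc n) =
      ModuleCat.ofHom (syzygyD N (n + 1)) := (syzygyFreeComplex N hp).toComplex_d _
    have h2 := (syzygyFreeComplex N hp).toComplex_d (Int.negSucc n)
    cases n with
    | zero =>
      exact ShortComplex.isoMk (Iso.refl _) (Iso.refl _) (Iso.refl _)
        (by
          refine (Category.id_comp _).trans (Eq.trans ?_ (Category.comp_id _).symm)
          exact congrArg Ψ.map h1)
        (by
          refine (Category.id_comp _).trans (Eq.trans ?_ (Category.comp_id _).symm)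
          exact congrArg Ψ.map h2)
    | succ n =>
      exact ShortComplex.isoMk (Iso.refl _) (Iso.refl _) (Iso.refl _)
        (by
          refine (Category.id_comp _).trans (Eq.trans ?_ (Category.comp_id _).symm)
          exact congrArg Ψ.map h1)
        (by
          refine (Category.id_comp _).trans (Eq.trans ?_ (Category.comp_id _).symm)
          exact congrArg Ψ.map h2)

theorem nonempty_homology_map_syzygyFreeComplex_iso [PreservesFiniteColimits Ψ] :
    Nonempty (((Ψ.mapHomologicalComplex (.up ℤ)).obj
      (syzygyFreeComplex N hp).toComplex).homology 0 ≅ Ψ.obj N) := by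
  let K := (Ψ.mapHomologicalComplex (.up ℤ)).obj (syzygyFreeComplex N hp).toComplex
  let e : K.sc 0 ≅ K.sc' (-1) 0 1 := K.isoSc' (-1) 0 1 (by simp) (by simp)
  have hd : (K.sc' (-1) 0 1).f = ((syzygyAugmentation N).map Ψ).f :=
    congrArg Ψ.map ((syzygyFreeComplex N hp).toComplex_d (-1))
  have h0 : (K.sc' (-1) 0 1).g = 0 :=
    (isZero_map_syzygyFreeComplex_X N hp Ψ 1 one_pos).eq_of_tgt _ _
  have hex : ((syzygyAugmentation N).map Ψ).Exact :=
    (syzygyAugmentation_exact N).map_of_epi_of_preservesCokernel Ψ inferInstance inferInstance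
  have hepi : Epi ((syzygyAugmentation N).map Ψ).g :=
    inferInstanceAs (Epi (Ψ.map (syzygyAugmentation N).g))
  have hw : (K.sc' (-1) 0 1).f ≫ ((syzygyAugmentation N).map Ψ).g = 0 :=
    (congrArg (· ≫ ((syzygyAugmentation N).map Ψ).g) hd).trans ((syzygyAugmentation N).map Ψ).zero
  have hc : IsColimit (CokernelCofork.ofπ ((syzygyAugmentation N).map Ψ).g hw) :=
    CokernelCofork.IsColimit.ofπ _ _
      (fun k hk ↦ hex.desc k ((congrArg (· ≫ k) hd.symm).trans hk))
      (fun k hk ↦ hex.g_desc k ((congrArg (· ≫ k) hd.symm).trans hk))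
      (fun k hk m hm ↦ (cancel_epi ((syzygyAugmentation N).map Ψ).g).mp
        (hm.trans (hex.g_desc k ((congrArg (· ≫ k) hd.symm).trans hk)).symm))
  let hd : (K.sc' (-1) 0 1).HomologyData := .ofIsColimitCokernelCofork _ h0 _ hc
  exact ⟨ShortComplex.homologyMapIso e ≪≫ hd.left.homologyIso⟩

theorem nonempty_Q_map_syzygyFreeComplex_iso [HasDerivedCategory D] [PreservesFiniteColimits Ψ]
    (h : ∀ n, 0 < n → IsZero ((Ψ.leftDerived n).obj N)) :
    Nonempty (DerivedCategory.Q.obj ((Ψ.mapHomologicalComplex (.up ℤ)).obj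
      (syzygyFreeComplex N hp).toComplex) ≅ (DerivedCategory.singleFunctor D 0).obj (Ψ.obj N)) :=
  nonempty_iso_singleFunctor_of_exactAt (exactAt_map_syzygyFreeComplex N hp Ψ h)
    (nonempty_homology_map_syzygyFreeComplex_iso N hp Ψ).some

end SyzygyFreeComplex

section ExtComparison

open Opposite

variable {R : Type u} [CommRing R]

theorem isZero_Ext_succ_iff_forall_eq_zero {C : Type*} [Category* C] [Abelian C] [Linear R C]
    [EnoughProjectives C] [HasExt C] {L : C} (P : ProjectiveResolution L) (X : C) (n : ℕ) :
    IsZero (((Ext R C (n + 1)).obj (op L)).obj X) ↔ ∀ x : Abelian.Ext L X (n + 1), x = 0 := by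
  rw [(P.isoExt (n + 1) X).isZero_iff, ← HomologicalComplex.exactAt_iff_isZero_homology,
    HomologicalComplex.exactAt_iff' _ n (n + 1) (n + 1 + 1) (by simp) (by simp),
    ShortComplex.moduleCat_exact_iff]
  constructor
  · intro h x
    obtain ⟨f, hf, rfl⟩ := P.extMk_surjective x (n + 1 + 1) rfl
    exact (P.extMk_eq_zero_iff f _ rfl hf n rfl).mpr (h f hf)
  · intro h f hf
    exact (P.extMk_eq_zero_iff f _ rfl hf n rfl).mp (h _)

theorem eventuallyNoShiftedHom_singleFunctor_iff [HasDerivedCategory (ModuleCat.{u} R)]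
    (L X : ModuleCat.{u} R) :
    EventuallyNoShiftedHom ((DerivedCategory.singleFunctor _ 0).obj L)
        ((DerivedCategory.singleFunctor _ 0).obj X) ↔
      ∃ n, ∀ i, n ≤ i → IsZero (((Ext R (ModuleCat.{u} R) i).obj (op L)).obj X) := by
  have key (n : ℕ) : IsZero (((Ext R (ModuleCat.{u} R) (n + 1)).obj (op L)).obj X) ↔
      ∀ g : (DerivedCategory.singleFunctor _ 0).obj L ⟶
        ((DerivedCategory.singleFunctor _ 0).obj X)⟦((n + 1 : ℕ) : ℤ)⟧, g = 0 := by
    rw [isZero_Ext_succ_iff_forall_eq_zero (syzygyResolution L)]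
    exact Abelian.Ext.homAddEquiv.toEquiv.forall_congr fun x ↦
      (EmbeddingLike.map_eq_zero_iff (f := Abelian.Ext.homAddEquiv)).symm
  constructor
  · rintro ⟨n, hn⟩
    refine ⟨n + 1, fun i hi ↦ ?_⟩
    obtain ⟨i, rfl⟩ := Nat.exists_eq_succ_of_ne_zero (by omega : i ≠ 0)
    exact (key i).mpr (hn (i + 1) (by omega))
  · rintro ⟨n, hn⟩
    refine ⟨n + 1, fun i hi ↦ ?_⟩
    obtain ⟨i, rfl⟩ := Nat.exists_eq_succ_of_ne_zero (by omega : i ≠ 0)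
    exact (key i).mp (hn (i + 1) (by omega))

theorem finiteShiftedHom_singleFunctor [IsNoetherianRing R] [HasDerivedCategory (ModuleCat.{u} R)]
    (L X : ModuleCat.{u} R) [Module.Finite R L] [Module.Finite R X] :
    FiniteShiftedHom R ((DerivedCategory.singleFunctor _ 0).obj L)
      ((DerivedCategory.singleFunctor _ 0).obj X) := fun i ↦
  Module.Finite.equiv (Abelian.Ext.homLinearEquiv (R := R) (X := L) (Y := X) (n := i))

end ExtComparison

theorem exists_surjective_residueField {R : Type*} [CommRing R] [IsLocalRing R] (N : Type*)
    [AddCommGroup N] [Module R N] [Module.Finite R N] [Nontrivial N] :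
    ∃ p : N →ₗ[R] IsLocalRing.ResidueField R, Function.Surjective p := by
  have : Nontrivial (TensorProduct R (IsLocalRing.ResidueField R) N) := by
    rw [← not_subsingleton_iff_nontrivial, IsLocalRing.subsingleton_tensorProduct]
    exact not_subsingleton N
  obtain ⟨x, hx⟩ := exists_ne (0 : TensorProduct R (IsLocalRing.ResidueField R) N)
  obtain ⟨g, hg⟩ := Module.Projective.exists_dual_eq_one (IsLocalRing.ResidueField R) hx
  refine ⟨g.restrictScalars R ∘ₗ TensorProduct.mk R (IsLocalRing.ResidueField R) N 1, ?_⟩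
  refine Function.Surjective.comp (g := g) (fun c ↦ ⟨c • x, by simp [hg]⟩) ?_
  exact TensorProduct.mk_surjective R N (IsLocalRing.ResidueField R) IsLocalRing.residue_surjective

theorem exists_Ext_isZero_of_isWeaklyRegular {Q R κ : Type u} [CommRing Q] [CommRing R]
    [CommRing κ] [IsNoetherianRing R] [Algebra Q R] [Algebra Q κ] [Algebra R κ]
    [IsScalarTower Q R κ] {fs xs : List Q} (hQR : Function.Surjective (algebraMap Q R))
    (hfs : RingTheory.Sequence.IsWeaklyRegular Q fs)
    (hkerR : RingHom.ker (algebraMap Q R) = Ideal.ofList fs)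
    (hQκ : Function.Surjective (algebraMap Q κ))
    (hxs : RingTheory.Sequence.IsWeaklyRegular Q xs)
    (hkerκ : RingHom.ker (algebraMap Q κ) = Ideal.ofList xs)
    (hjac : ∀ x ∈ xs, algebraMap Q R x ∈ (⊥ : Ideal R).jacobson)
    (M N L : ModuleCat.{u} R) [Module.Finite R M] [Module.Finite R L] {p : N →ₗ[R] κ}
    (hp : Function.Surjective p)
    (htor : ∀ i, 0 < i → IsZero (((Tor (ModuleCat.{u} R) i).obj M).obj N))
    (hext : ∃ n, ∀ i, n ≤ i → IsZero (((Ext R (ModuleCat.{u} R) i).obj (Opposite.op L)).obj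
      (MonoidalCategory.tensorObj M N))) :
    ∃ n, ∀ i, n ≤ i → IsZero (((Ext R (ModuleCat.{u} R) i).obj (Opposite.op L)).obj M) := by
  have := HasDerivedCategory.standard (ModuleCat.{u} R)
  obtain ⟨e⟩ := nonempty_Q_map_syzygyFreeComplex_iso N hp (MonoidalCategory.tensorLeft M) htor
  obtain ⟨P, hP, hLP⟩ := FreeComplex.exists_lifts (MonoidalCategory.tensorLeft M)
    (syzygyFreeComplex N hp)
    (((eventuallyNoShiftedHom_singleFunctor_iff L _).mpr hext).of_iso e.symm) hQR hkerR hfs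
  exact (eventuallyNoShiftedHom_singleFunctor_iff L M).mp
    (P.eventuallyNoShiftedHom_single hP hQR hxs hjac hQκ hkerκ M
      (finiteShiftedHom_singleFunctor L M) hLP)

end Derived

theorem stmt_1 (Q : Type u) [CommRing Q] [IsLocalRing Q] (hQ : IsRegularLocal Q)
    (f : List Q) (hf : RingTheory.Sequence.IsRegular Q f)
    (M N L : ModuleCat.{u} (Q ⧸ Ideal.ofList f))
    [Module.Finite (Q ⧸ Ideal.ofList f) M] [Module.Finite (Q ⧸ Ideal.ofList f) N]
    [Module.Finite (Q ⧸ Ideal.ofList f) L]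
    (hN : Nontrivial N)
    (htor : ∀ i : ℕ, 0 < i →
      IsZero (((Tor (ModuleCat.{u} (Q ⧸ Ideal.ofList f)) i).obj M).obj N))
    (hext : ∃ n : ℕ, ∀ i : ℕ, n ≤ i →
      IsZero (((Ext (Q ⧸ Ideal.ofList f) (ModuleCat.{u} (Q ⧸ Ideal.ofList f)) i).obj
        (Opposite.op L)).obj (MonoidalCategory.tensorObj M N))) :
    ∃ n : ℕ, ∀ i : ℕ, n ≤ i →
      IsZero (((Ext (Q ⧸ Ideal.ofList f) (ModuleCat.{u} (Q ⧸ Ideal.ofList f)) i).obj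
        (Opposite.op L)).obj M) := by
  have := hQ.1
  obtain ⟨s, hs, hdim⟩ := hQ.2
  obtain ⟨xs, hxs, hxs_eq⟩ :=
    exists_isWeaklyRegular_of_span_eq_maximalIdeal s.card Q s le_rfl hs hdim.le
  have hsurj : Function.Surjective (algebraMap Q (Q ⧸ Ideal.ofList f)) :=
    Ideal.Quotient.mk_surjective
  have : Nontrivial (Q ⧸ Ideal.ofList f) := Module.nontrivial _ N
  have := IsLocalRing.of_surjective' (algebraMap Q (Q ⧸ Ideal.ofList f)) hsurj
  have := IsLocalHom.of_surjective (algebraMap Q (Q ⧸ Ideal.ofList f)) hsurj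
  obtain ⟨p, hp⟩ := exists_surjective_residueField (R := Q ⧸ Ideal.ofList f) N
  have hκ : Function.Surjective
      (algebraMap Q (IsLocalRing.ResidueField (Q ⧸ Ideal.ofList f))) :=
    IsLocalRing.residue_surjective.comp hsurj
  have hker : RingHom.ker (algebraMap Q (IsLocalRing.ResidueField (Q ⧸ Ideal.ofList f))) =
      Ideal.ofList xs :=
    (IsLocalRing.eq_maximalIdeal (RingHom.ker_isMaximal_of_surjective _ hκ)).trans hxs_eq.symm
  refine exists_Ext_isZero_of_isWeaklyRegular hsurj hf.toIsWeaklyRegular Ideal.mk_ker hκ hxs hker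
    (fun x hx ↦ ?_) M N L hp htor hext
  rw [IsLocalRing.jacobson_eq_maximalIdeal _ bot_ne_top]
  refine map_nonunit (algebraMap Q (Q ⧸ Ideal.ofList f)) x ?_
  rw [← hxs_eq]
  exact Ideal.subset_span hx
end

section
/- Let Q be a regular local ring, f₁,…,f_c a Q-regular sequence, and R = Q/(f₁,…,f_c) (a local complete intersection). Let M, N, L be finitely generated R-modules with N ≠ 0 and Tor_i^R(M,N) = 0 for all i > 0. If Tor_i^R(M ⊗_R N, L) = 0 for all sufficiently large i, then Tor_i^R(M, L) = 0 for all sufficiently large i. -/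
/-!
STATEMENT 2: If `R = Q ⧸ (f₁, …, f_c)` is a local complete intersection (`Q` regular local,
`f` a `Q`-regular sequence), `M, N, L` are finitely generated `R`-modules with `N ≠ 0` and
`Tor_i^R(M, N) = 0` for all `i > 0`, and `Tor_i^R(M ⊗_R N, L) = 0` for `i ≫ 0`, then
`Tor_i^R(M, L) = 0` for `i ≫ 0`.
-/

open CategoryTheory CategoryTheory.Limits

universe u

section MatrixAction

variable {R : Type*} [CommRing R] {m n k : Type*} [Fintype n] [Fintype k]
  {W : Type*} [AddCommGroup W] [Module R W] {W' : Type*} [AddCommGroup W'] [Module R W']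

/-- The action of a matrix over `R` on vectors with entries in an `R`-module. -/
def Matrix.actVec (A : Matrix m n R) (W : Type*) [AddCommGroup W] [Module R W] :
    (n → W) →ₗ[R] (m → W) where
  toFun v i := ∑ j, A i j • v j
  map_add' v w := by ext i; simp [Finset.sum_add_distrib]
  map_smul' c v := by ext i; simp [Finset.smul_sum, smul_comm c]

theorem Matrix.actVec_apply (A : Matrix m n R) (v : n → W) (i : m) :
    A.actVec W v i = ∑ j, A i j • v j := rfl

theorem Matrix.actVec_mul (A : Matrix m n R) (B : Matrix n k R) (v : k → W) :
    (A * B).actVec W v = A.actVec W (B.actVec W v) := by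
  ext i
  simp only [Matrix.actVec_apply, Matrix.mul_apply, Finset.sum_smul, Finset.smul_sum, mul_smul]
  exact Finset.sum_comm

theorem Matrix.actVec_comp (A : Matrix m n R) (g : W →ₗ[R] W') (v : n → W) :
    A.actVec W' (fun j => g (v j)) = fun i => g (A.actVec W v i) := by
  ext i
  simp [Matrix.actVec_apply]

theorem Matrix.actVec_mem (A : Matrix m n R) (I : Ideal R) {v : n → R} (hv : ∀ j, v j ∈ I)
    (i : m) : A.actVec R v i ∈ I :=
  I.sum_mem fun j _ => I.mul_mem_left _ (hv j)

theorem Matrix.actVec_mem_of_entries (A : Matrix m n R) (I : Ideal R) (hA : ∀ i j, A i j ∈ I)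
    (v : n → R) (i : m) : A.actVec R v i ∈ I :=
  I.sum_mem fun j _ => I.mul_mem_right _ (hA i j)

end MatrixAction

section Cone

variable {Q : Type u} [CommRing Q] {ι : ℕ → Type} [∀ n, Fintype (ι n)]

/-- The sequence of maps `ι (n+1) → ι n` given by matrices is exact in all large degrees when it
acts on vectors with entries in `W`. -/
def EventuallyExact (W : Type*) [AddCommGroup W] [Module Q W]
    (d : ∀ n, Matrix (ι n) (ι (n + 1)) Q) : Prop :=
  ∃ n₀, ∀ n, n₀ ≤ n → ∀ v : ι (n + 1) → W, (d n).actVec W v = 0 →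
    ∃ w, (d (n + 1)).actVec W w = v

/-- In all large degrees, each cycle modulo `I` is a boundary modulo `J`. -/
def EventuallyExactMod (I J : Ideal Q) (d : ∀ n, Matrix (ι n) (ι (n + 1)) Q) : Prop :=
  ∃ n₀, ∀ n, n₀ ≤ n → ∀ v : ι (n + 1) → Q, (∀ i, (d n).actVec Q v i ∈ I) →
    ∃ w, ∀ i, v i - (d (n + 1)).actVec Q w i ∈ J

open Classical in
/-- The cone of multiplication by `x`, twisted by a homotopy `t` between `d ∘ d` and `0`. -/
noncomputable def twistedCone (d : ∀ n, Matrix (ι n) (ι (n + 1)) Q) (x : Q)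
    (t : ∀ n, Matrix (ι n) (ι (n + 2)) Q) (n : ℕ) :
    Matrix (ι (n + 1) ⊕ ι n) (ι (n + 2) ⊕ ι (n + 1)) Q :=
  Matrix.fromBlocks (d (n + 1)) (x • 1) (-(t n)) (-(d n))

variable (d : ∀ n, Matrix (ι n) (ι (n + 1)) Q) (x : Q) (t : ∀ n, Matrix (ι n) (ι (n + 2)) Q)

variable {W : Type*} [AddCommGroup W] [Module Q W]

theorem twistedCone_actVec_inl (n : ℕ) (v : ι (n + 2) ⊕ ι (n + 1) → W) (i : ι (n + 1)) :
    (twistedCone d x t n).actVec W v (Sum.inl i) =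
      (d (n + 1)).actVec W (v ∘ Sum.inl) i + x • v (Sum.inr i) := by
  classical
  simp [twistedCone, Matrix.actVec_apply, Matrix.one_apply, ite_smul]

theorem twistedCone_actVec_inr (n : ℕ) (v : ι (n + 2) ⊕ ι (n + 1) → W) (i : ι n) :
    (twistedCone d x t n).actVec W v (Sum.inr i) =
      -(t n).actVec W (v ∘ Sum.inl) i - (d n).actVec W (v ∘ Sum.inr) i := by
  simp [twistedCone, Matrix.actVec_apply, sub_eq_add_neg]

theorem twistedCone_mul_mem (J : Ideal Q) (hx : ∀ a, x * a ∈ J → a ∈ J)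
    (ht : ∀ n i k, (d n * d (n + 1)) i k - x * t n i k ∈ J) (n : ℕ) (i k) :
    (twistedCone d x t n * twistedCone d x t (n + 1)) i k ∈ J := by
  classical
  let π := Ideal.Quotient.mk J
  have hdd : ∀ n, (d n).map π * (d (n + 1)).map π = π x • (t n).map π := by
    intro n
    rw [← Matrix.map_mul]
    ext i k
    have := Ideal.Quotient.eq.2 (ht n i k)
    simpa [π] using this
  have hcomm : (d n).map π * (t (n + 1)).map π = (t n).map π * (d (n + 2)).map π := by
    have h : π x • ((d n).map π * (t (n + 1)).map π) =
        π x • ((t n).map π * (d (n + 2)).map π) := by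
      rw [← Matrix.mul_smul, ← hdd, ← Matrix.smul_mul, ← hdd, Matrix.mul_assoc]
    rw [← Matrix.map_mul, ← Matrix.map_mul] at h ⊢
    ext a b
    have hab := congr_fun (congr_fun h a) b
    simp only [Matrix.smul_apply, Matrix.map_apply, smul_eq_mul] at hab ⊢
    rw [← map_mul, ← map_mul] at hab
    have h0 := Ideal.Quotient.eq.1 hab
    rw [← mul_sub] at h0
    exact Ideal.Quotient.eq.2 (hx _ h0)
  have hzero : (twistedCone d x t n * twistedCone d x t (n + 1)).map π = 0 := by
    rw [Matrix.map_mul, twistedCone, twistedCone, Matrix.fromBlocks_map, Matrix.fromBlocks_map,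
      Matrix.fromBlocks_multiply, ← Matrix.fromBlocks_zero]
    have hone : ∀ m, ((x • 1 : Matrix (ι m) (ι m) Q)).map π = π x • 1 := by
      intro m
      ext a b
      simp [Matrix.one_apply, apply_ite π]
    have hneg : ∀ {a b : Type} (A : Matrix a b Q), (-A).map π = -(A.map π) := by
      intro a b A
      ext
      simp
    congr 1 <;> simp only [hone, hneg, hdd] <;>
      simp [hcomm, hdd]
  have := congr_fun (congr_fun hzero i) k
  exact Ideal.Quotient.eq_zero_iff_mem.1 this

/-- If `x` annihilates `W`, the twisted cone acting on `W` is an extension of two copies of `d`. -/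
theorem EventuallyExact.twistedCone_of_smul_eq_zero (hd : EventuallyExact W d)
    (hW : ∀ w : W, x • w = 0)
    (hsq : ∀ n v, (twistedCone d x t n).actVec W ((twistedCone d x t (n + 1)).actVec W v) = 0) :
    EventuallyExact W (twistedCone d x t) := by
  obtain ⟨n₀, h⟩ := hd
  refine ⟨n₀, fun n hn v hv => ?_⟩
  have h1 := fun i => congr_fun hv (Sum.inl i)
  simp only [twistedCone_actVec_inl] at h1
  obtain ⟨a, ha⟩ := h (n + 1) (by omega) (v ∘ Sum.inl) (by ext i; simpa [hW] using h1 i)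
  let z := v - (twistedCone d x t (n + 1)).actVec W (Sum.elim a 0)
  have hz : (twistedCone d x t n).actVec W z = 0 := by rw [map_sub, hv, hsq, sub_zero]
  have hzl : z ∘ Sum.inl = 0 := by
    ext i
    have := congr_fun ha i
    simp [z, twistedCone_actVec_inl, this]
  have h2 := fun i => congr_fun hz (Sum.inr i)
  simp only [twistedCone_actVec_inr, hzl] at h2
  obtain ⟨c, hc⟩ := h n hn (z ∘ Sum.inr) (by ext i; simpa using h2 i)
  refine ⟨Sum.elim a 0 - Sum.elim (0 : ι (n + 1 + 2) → W) c, ?_⟩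
  suffices (twistedCone d x t (n + 1)).actVec W (Sum.elim (0 : ι (n + 1 + 2) → W) c) = -z by
    rw [map_sub, this]; simp [z]
  ext i
  rcases i with i | i
  · have := congr_fun hzl i
    simp only [Function.comp_apply] at this
    simp [twistedCone_actVec_inl, hW, this]
  · have := congr_fun hc i
    simp only [Function.comp_apply] at this
    simp [twistedCone_actVec_inr, this]

/-- The cone of multiplication by `x` on an eventually exact complex is eventually exact. -/
theorem EventuallyExact.cone (hd : EventuallyExact W d) :
    EventuallyExact W (twistedCone d x 0) := by
  obtain ⟨n₀, h⟩ := hd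
  refine ⟨n₀, fun n hn v hv => ?_⟩
  have h1 := fun i => congr_fun hv (Sum.inl i)
  have h2 := fun i => congr_fun hv (Sum.inr i)
  simp only [twistedCone_actVec_inl, twistedCone_actVec_inr] at h1 h2
  obtain ⟨b, hb⟩ := h n hn (v ∘ Sum.inr) (by ext i; simpa [Matrix.actVec_apply] using h2 i)
  obtain ⟨a, ha⟩ := h (n + 1) (by omega) (v ∘ Sum.inl + x • b) (by
    ext i
    have := h1 i
    rw [map_add, map_smul, hb]
    simpa using this)
  refine ⟨Sum.elim a (-b), ?_⟩
  ext i
  rcases i with i | i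
  · have := congr_fun ha i
    simp only [twistedCone_actVec_inl, Sum.elim_comp_inl, Sum.elim_inr] at this ⊢
    rw [this]; simp
  · have := congr_fun hb i
    simp only [twistedCone_actVec_inr, Sum.elim_comp_inl, Sum.elim_comp_inr, map_neg]
    simpa [Matrix.actVec_apply] using this

/-- Eventual exactness descends along killing an element regular modulo `J`. -/
theorem eventuallyExactMod_of_twistedCone {J K : Ideal Q} (hxK : x ∈ K)
    (hx : ∀ a, x * a ∈ J → a ∈ J)
    (ht : ∀ n i k, (d n * d (n + 1)) i k - x * t n i k ∈ J)
    (h : EventuallyExactMod J K (twistedCone d x t)) :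
    EventuallyExactMod (J ⊔ Ideal.span {x}) K d := by
  obtain ⟨n₀, h⟩ := h
  refine ⟨n₀ + 1, fun m hm v hv => ?_⟩
  obtain ⟨n, rfl⟩ : ∃ n, m = n + 1 := ⟨m - 1, by omega⟩
  have : ∀ i, ∃ b, (d (n + 1)).actVec Q v i - x * b ∈ J := fun i => by
    obtain ⟨j, hj, y, hy, hjy⟩ := Submodule.mem_sup.1 (hv i)
    obtain ⟨b, rfl⟩ := Ideal.mem_span_singleton'.1 hy
    exact ⟨b, by rw [← hjy]; simpa [mul_comm] using hj⟩
  choose b hb using this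
  have hdv : ∀ i, x * ((t n).actVec Q v i - (d n).actVec Q b i) ∈ J := by
    intro i
    have e1 := (d n).actVec_mem J hb i
    have e2 := (d n * d (n + 1) - x • t n).actVec_mem_of_entries J (ht n) v i
    have e3 : (d n * d (n + 1) - x • t n).actVec Q v i =
        (d n).actVec Q ((d (n + 1)).actVec Q v) i - x * (t n).actVec Q v i := by
      rw [← Matrix.actVec_mul]
      simp [Matrix.actVec_apply, sub_mul, Finset.mul_sum, mul_assoc]
    have e4 : (d n).actVec Q (fun i => (d (n + 1)).actVec Q v i - x * b i) i =
        (d n).actVec Q ((d (n + 1)).actVec Q v) i - x * (d n).actVec Q b i := by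
      have : (fun i => (d (n + 1)).actVec Q v i - x * b i) =
        (d (n + 1)).actVec Q v - x • b := by ext; simp
      rw [this, map_sub, map_smul]; simp
    rw [e4] at e1
    rw [e3] at e2
    have := J.sub_mem e1 e2
    convert this using 1
    ring
  obtain ⟨w, hw⟩ := h n (by omega) (Sum.elim v (-b)) (by
    rintro (i | i)
    · simpa [twistedCone_actVec_inl, sub_eq_add_neg] using hb i
    · have := J.neg_mem (hx _ (hdv i))
      simpa [twistedCone_actVec_inr, sub_eq_add_neg, add_comm] using this)
  refine ⟨w ∘ Sum.inl, fun i => ?_⟩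
  have := hw (Sum.inl i)
  rw [twistedCone_actVec_inl] at this
  have h2 := K.add_mem this (K.mul_mem_right (w (Sum.inr i)) hxK)
  simpa [sub_add_eq_sub_sub] using h2

end Cone

section Amplitude

variable {Q : Type u} [CommRing Q] {W : Type*} [AddCommGroup W] [Module Q W]

/-- Eventual exactness on `W` of a sequence of matrices with successive products in `I` implies
that in large degrees cycles modulo `I` are boundaries modulo `J`. -/
def DetectsMod (W : Type*) [AddCommGroup W] [Module Q W] (I J : Ideal Q) : Prop :=
  ∀ (ι : ℕ → Type) [∀ n, Fintype (ι n)] (d : ∀ n, Matrix (ι n) (ι (n + 1)) Q),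
    (∀ n i k, (d n * d (n + 1)) i k ∈ I) → EventuallyExact W d → EventuallyExactMod I J d

theorem DetectsMod.sup_span {J : Ideal Q} {x : Q} (hx : ∀ a, x * a ∈ J → a ∈ J)
    (hJ : ∀ a ∈ J, ∀ w : W, a • w = 0) (hxW : ∀ w : W, x • w = 0)
    (h : DetectsMod W J J) :
    DetectsMod W (J ⊔ Ideal.span {x}) (J ⊔ Ideal.span {x}) := by
  intro ι _ d hd hW
  have : ∀ n i k, ∃ b, (d n * d (n + 1)) i k - x * b ∈ J := fun n i k => by
    obtain ⟨j, hj, y, hy, hjy⟩ := Submodule.mem_sup.1 (hd n i k)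
    obtain ⟨b, rfl⟩ := Ideal.mem_span_singleton'.1 hy
    exact ⟨b, by rw [← hjy]; simpa [mul_comm] using hj⟩
  choose t ht using this
  have hsq := twistedCone_mul_mem d x t J hx ht
  refine eventuallyExactMod_of_twistedCone d x t
    (le_sup_right (a := J) (Ideal.mem_span_singleton_self x)) hx ht ?_
  obtain ⟨n₀, h₀⟩ := h _ (twistedCone d x t) hsq (hW.twistedCone_of_smul_eq_zero d x t hxW (by
    intro n v
    rw [← Matrix.actVec_mul]
    ext i
    exact Finset.sum_eq_zero fun k _ => hJ _ (hsq n i k) _))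
  refine ⟨n₀, fun n hn v hv => ?_⟩
  obtain ⟨w, hw⟩ := h₀ n hn v hv
  exact ⟨w, fun i => le_sup_left (a := J) (hw i)⟩

/-- For honest complexes: cycles modulo `J` become boundaries modulo the maximal ideal. -/
theorem eventuallyExactMod_maximalIdeal_sup_span [IsLocalRing Q] {J : Ideal Q} {x : Q}
    (hxm : x ∈ IsLocalRing.maximalIdeal Q) (hx : ∀ a, x * a ∈ J → a ∈ J)
    (h : ∀ (ι : ℕ → Type) [∀ n, Fintype (ι n)] (d : ∀ n, Matrix (ι n) (ι (n + 1)) Q),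
      (∀ n, d n * d (n + 1) = 0) → EventuallyExact W d →
      EventuallyExactMod J (IsLocalRing.maximalIdeal Q) d)
    (ι : ℕ → Type) [∀ n, Fintype (ι n)] (d : ∀ n, Matrix (ι n) (ι (n + 1)) Q)
    (hd : ∀ n, d n * d (n + 1) = 0) (hW : EventuallyExact W d) :
    EventuallyExactMod (J ⊔ Ideal.span {x}) (IsLocalRing.maximalIdeal Q) d := by
  refine eventuallyExactMod_of_twistedCone d x 0 hxm hx (by simp [hd])
    (h _ _ (fun n => ?_) (hW.cone d x))
  classical
  rw [twistedCone, twistedCone, Matrix.fromBlocks_multiply, ← Matrix.fromBlocks_zero]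
  congr 1 <;> simp [hd]

theorem eventuallyExactMod_bot [IsLocalRing Q] [Module.Finite Q W] [Nontrivial W]
    {ι : ℕ → Type} [∀ n, Fintype (ι n)] (d : ∀ n, Matrix (ι n) (ι (n + 1)) Q)
    (hW : EventuallyExact W d) :
    EventuallyExactMod ⊥ (IsLocalRing.maximalIdeal Q) d := by
  obtain ⟨ψ, w₀, hψ⟩ : ∃ (ψ : W →ₗ[Q] IsLocalRing.ResidueField Q) (w₀ : W), ψ w₀ = 1 := by
    obtain ⟨V, hV, -⟩ := (eq_top_or_exists_le_coatom (⊥ : Submodule Q W)).resolve_left bot_ne_top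
    have : IsSimpleModule Q (W ⧸ V) := isSimpleModule_iff_isCoatom.2 hV
    obtain ⟨I, hI, ⟨e⟩⟩ := isSimpleModule_iff_quot_maximal.1 this
    obtain rfl := IsLocalRing.eq_maximalIdeal hI
    obtain ⟨w₀, hw₀⟩ := V.mkQ_surjective (e.symm 1)
    exact ⟨e.toLinearMap ∘ₗ V.mkQ, w₀, (congrArg e hw₀).trans (e.apply_symm_apply 1)⟩
  obtain ⟨n₀, h⟩ := hW
  refine ⟨n₀, fun n hn v hv => ?_⟩
  obtain ⟨w, hw⟩ := h n hn (fun i => v i • w₀) (by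
    have := (d n).actVec_comp (LinearMap.toSpanSingleton Q W w₀) v
    simp only [LinearMap.toSpanSingleton_apply] at this
    rw [this]
    ext i
    simp [Ideal.mem_bot.1 (hv i)])
  have : ∀ j, ∃ a : Q, IsLocalRing.residue Q a = ψ (w j) := fun j =>
    IsLocalRing.residue_surjective _
  choose a ha using this
  refine ⟨a, fun i => ?_⟩
  rw [← IsLocalRing.residue_eq_zero_iff, map_sub, sub_eq_zero]
  have h1 := congr_fun ((d (n + 1)).actVec_comp ψ w) i
  have h2 := congr_fun ((d (n + 1)).actVec_comp
    (Algebra.linearMap Q (IsLocalRing.ResidueField Q)) a) i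
  simp only [hw, map_smul, hψ] at h1
  simp only [Algebra.linearMap_apply] at h2
  have h3 : ∀ q, algebraMap Q (IsLocalRing.ResidueField Q) q = IsLocalRing.residue Q q :=
    fun _ => rfl
  simp only [h3, ha] at h2
  rw [← h2, h1, Algebra.smul_def, mul_one, h3]

theorem EventuallyExactMod.of_sup_span [IsLocalRing Q] [IsNoetherianRing Q] {J : Ideal Q} {x : Q}
    (hxm : x ∈ IsLocalRing.maximalIdeal Q) (hx : ∀ a, x * a ∈ J → a ∈ J)
    {ι : ℕ → Type} [∀ n, Fintype (ι n)] (d : ∀ n, Matrix (ι n) (ι (n + 1)) Q)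
    (hd : ∀ n, d n * d (n + 1) = 0)
    (h : EventuallyExactMod (J ⊔ Ideal.span {x}) (J ⊔ Ideal.span {x}) d) :
    EventuallyExactMod J J d := by
  obtain ⟨n₀, h⟩ := h
  refine ⟨n₀, fun n hn => ?_⟩
  let Z : Submodule Q (ι (n + 1) → Q) :=
    (Submodule.pi Set.univ fun _ => J).comap ((d n).actVec Q)
  let B : Submodule Q (ι (n + 1) → Q) :=
    LinearMap.range ((d (n + 1)).actVec Q) ⊔ Submodule.pi Set.univ fun _ => J
  suffices Z ≤ B by
    intro v hv
    obtain ⟨_, ⟨w, rfl⟩, j, hj, rfl⟩ :=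
      Submodule.mem_sup.1 (this (show v ∈ Z by simpa [Z] using hv))
    exact ⟨w, fun i => by simpa using hj i⟩
  refine Submodule.le_of_le_smul_of_le_jacobson_bot (I := Ideal.span {x})
    (IsNoetherian.noetherian _)
    ?_ ?_
  · rw [IsLocalRing.jacobson_eq_maximalIdeal _ bot_ne_top, Ideal.span_singleton_le_iff_mem]
    exact hxm
  intro v hv
  have hv' : ∀ i, (d n).actVec Q v i ∈ J := by simpa [Z] using hv
  obtain ⟨w, hw⟩ := h n hn v (fun i => le_sup_left (a := J) (hv' i))
  have : ∀ i, ∃ b, v i - (d (n + 1)).actVec Q w i - x * b ∈ J := fun i => by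
    obtain ⟨j, hj, y, hy, hjy⟩ := Submodule.mem_sup.1 (hw i)
    obtain ⟨b, rfl⟩ := Ideal.mem_span_singleton'.1 hy
    exact ⟨b, by rw [← hjy]; simpa [mul_comm] using hj⟩
  choose b hb using this
  have hbZ : b ∈ Z := by
    suffices ∀ i, (d n).actVec Q b i ∈ J by simpa [Z] using this
    intro i
    apply hx
    have e1 := (d n).actVec_mem J hb i
    have : (fun i => v i - (d (n + 1)).actVec Q w i - x * b i) =
        v - (d (n + 1)).actVec Q w - x • b := by ext; simp
    rw [this, map_sub, map_sub, map_smul, ← Matrix.actVec_mul, hd] at e1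
    have h0 : (0 : Matrix (ι n) (ι (n + 1 + 1)) Q).actVec Q w = 0 := by
      ext; simp [Matrix.actVec_apply]
    rw [h0] at e1
    have := J.sub_mem (hv' i) e1
    simpa using this
  have : v = ((d (n + 1)).actVec Q w + (v - (d (n + 1)).actVec Q w - x • b)) + x • b := by abel
  rw [this]
  refine Submodule.add_mem_sup (Submodule.add_mem_sup ⟨w, rfl⟩ ?_)
    (Submodule.smul_mem_smul (Ideal.mem_span_singleton_self x) hbZ)
  simpa [Submodule.mem_pi] using hb

open RingTheory.Sequence in
theorem regular_mod_ofList {xs : List Q} {x : Q} (h : IsWeaklyRegular Q (xs ++ [x])) (a : Q)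
    (ha : x * a ∈ Ideal.ofList xs) : a ∈ Ideal.ofList xs := by
  have h1 := (isWeaklyRegular_append_iff Q xs [x]).1 h |>.2
  rw [isWeaklyRegular_singleton_iff] at h1
  have h2 := (isSMulRegular_quotient_iff_mem_of_smul_mem _ _).1 h1 a
  simpa using h2 (by simpa using ha)

open RingTheory.Sequence in
theorem detectsMod_bot [IsLocalRing Q] [IsNoetherianRing Q] [Module.Finite Q W] [Nontrivial W]
    (xs : List Q) (hxs : IsWeaklyRegular Q xs)
    (hm : Ideal.ofList xs = IsLocalRing.maximalIdeal Q) : DetectsMod W (⊥ : Ideal Q) ⊥ := by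
  intro ι _ d hd hW
  replace hd : ∀ n, d n * d (n + 1) = 0 := fun n => by ext i k; exact hd n i k
  have hup : EventuallyExactMod (IsLocalRing.maximalIdeal Q) (IsLocalRing.maximalIdeal Q) d := by
    have key : ∀ xs : List Q, (∀ x ∈ xs, x ∈ IsLocalRing.maximalIdeal Q) → IsWeaklyRegular Q xs →
        ∀ (ι : ℕ → Type) [∀ n, Fintype (ι n)] (d : ∀ n, Matrix (ι n) (ι (n + 1)) Q),
        (∀ n, d n * d (n + 1) = 0) → EventuallyExact W d →
        EventuallyExactMod (Ideal.ofList xs) (IsLocalRing.maximalIdeal Q) d := by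
      intro xs
      induction xs using List.reverseRecOn with
      | nil =>
        intro _ _ ι _ d _ hW
        rw [Ideal.ofList_nil]
        exact eventuallyExactMod_bot d hW
      | append_singleton xs x ih =>
        intro hmem hreg ι _ d hd hW
        rw [Ideal.ofList_append, Ideal.ofList_singleton]
        exact eventuallyExactMod_maximalIdeal_sup_span (hmem x (by simp)) (regular_mod_ofList hreg)
          (ih (fun y hy => hmem y (by simp [hy]))
            ((isWeaklyRegular_append_iff Q xs [x]).1 hreg).1) ι d hd hW
    have := key xs (fun x hx => hm ▸ Ideal.subset_span hx) hxs ι d hd hW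
    rwa [hm] at this
  have key : ∀ xs : List Q, (∀ x ∈ xs, x ∈ IsLocalRing.maximalIdeal Q) → IsWeaklyRegular Q xs →
      EventuallyExactMod (Ideal.ofList xs) (Ideal.ofList xs) d → EventuallyExactMod ⊥ ⊥ d := by
    intro xs
    induction xs using List.reverseRecOn with
    | nil =>
      intro _ _ h
      rwa [Ideal.ofList_nil] at h
    | append_singleton xs x ih =>
      intro hmem hreg h
      rw [Ideal.ofList_append, Ideal.ofList_singleton] at h
      exact ih (fun y hy => hmem y (by simp [hy])) ((isWeaklyRegular_append_iff Q xs [x]).1 hreg).1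
        (h.of_sup_span (hmem x (by simp)) (regular_mod_ofList hreg) d hd)
  exact key xs (fun x hx => hm ▸ Ideal.subset_span hx) hxs (hm ▸ hup)

open RingTheory.Sequence in
/-- A nonzero finite module annihilated by a regular sequence of a regular local ring detects
eventual exactness modulo this sequence. -/
theorem detectsMod_ofList [IsLocalRing Q] [IsNoetherianRing Q] [Module.Finite Q W] [Nontrivial W]
    (xs : List Q) (hxs : IsWeaklyRegular Q xs)
    (hm : Ideal.ofList xs = IsLocalRing.maximalIdeal Q) (fs : List Q) (hfs : IsWeaklyRegular Q fs)
    (hW : ∀ a ∈ Ideal.ofList fs, ∀ w : W, a • w = 0) :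
    DetectsMod W (Ideal.ofList fs) (Ideal.ofList fs) := by
  induction fs using List.reverseRecOn with
  | nil =>
    rw [Ideal.ofList_nil]
    exact detectsMod_bot xs hxs hm
  | append_singleton fs f ih =>
    rw [Ideal.ofList_append, Ideal.ofList_singleton] at hW ⊢
    have hW' : ∀ a ∈ Ideal.ofList fs, ∀ w : W, a • w = 0 := fun a ha =>
      hW a (Ideal.mem_sup_left ha)
    exact (ih ((isWeaklyRegular_append_iff Q fs [f]).1 hfs).1 hW').sup_span
      (regular_mod_ofList hfs) hW' (hW f (Ideal.mem_sup_right (Ideal.mem_span_singleton_self f)))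

end Amplitude

section RegularLocal

open IsLocalRing RingTheory.Sequence

theorem WithBot.natCast_le_of_succ_le_add_one {n : ℕ} {a : WithBot ℕ∞}
    (h : ((n + 1 : ℕ) : WithBot ℕ∞) ≤ a + 1) : (n : WithBot ℕ∞) ≤ a := by
  rw [Nat.cast_succ] at h
  exact ENat.WithBot.add_le_add_one_right_iff.1 h

theorem exists_prime_le_ringKrullDim_quotient {Q : Type*} [CommRing Q] {n : ℕ}
    (h : (n : WithBot ℕ∞) ≤ ringKrullDim Q) :
    ∃ p : Ideal Q, p.IsPrime ∧ (n : WithBot ℕ∞) ≤ ringKrullDim (Q ⧸ p) := by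
  obtain ⟨l, rfl⟩ := Order.le_krullDim_iff.1 h
  refine ⟨l.head.asIdeal, l.head.isPrime, ?_⟩
  rw [ringKrullDim_quotient]
  exact Order.le_krullDim_iff.2 ⟨⟨l.length, fun i => ⟨l i, LTSeries.head_le l i⟩, l.step⟩, rfl⟩

theorem ringKrullDim_le_length {Q : Type*} [CommRing Q] [IsLocalRing Q] [IsNoetherianRing Q]
    (xs : List Q) (hm : Ideal.ofList xs = maximalIdeal Q) : ringKrullDim Q ≤ xs.length := by
  classical
  refine (ringKrullDim_le_spanFinrank_maximalIdeal Q).trans ?_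
  have h : ((xs.toFinset : Set Q)) = {x | x ∈ xs} := by ext; simp
  have : (maximalIdeal Q).spanFinrank ≤ (xs.toFinset : Set Q).ncard := by
    rw [← hm, Ideal.ofList, ← h]
    exact Submodule.spanFinrank_span_le_ncard_of_finite (Finset.finite_toSet _)
  rw [Set.ncard_coe_finset] at this
  exact_mod_cast this.trans xs.toFinset_card_le

theorem ringKrullDim_le_quotient_span_singleton_add_one {Q : Type*} [CommRing Q] [IsLocalRing Q]
    [IsNoetherianRing Q] {x : Q} (hx : x ∈ maximalIdeal Q) :
    ringKrullDim Q ≤ ringKrullDim (Q ⧸ Ideal.span {x}) + 1 := by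
  have := ringKrullDim_le_ringKrullDim_quotient_add_card ({x} : Finset Q)
    (by simpa [IsLocalRing.ringJacobson_eq_maximalIdeal] using hx)
  rwa [Finset.coe_singleton, Finset.card_singleton, Nat.cast_one] at this

theorem isDomain_of_ringKrullDim_quotient_span_singleton {Q : Type*} [CommRing Q]
    [IsLocalRing Q] [IsNoetherianRing Q] {x : Q} (hx : x ∈ maximalIdeal Q) {n : ℕ}
    [IsDomain (Q ⧸ Ideal.span {x})] (hle : ringKrullDim (Q ⧸ Ideal.span {x}) ≤ n)
    (hdim : ((n + 1 : ℕ) : WithBot ℕ∞) ≤ ringKrullDim Q) : IsDomain Q ∧ x ≠ 0 := by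
  obtain ⟨p, hp, hpdim⟩ := exists_prime_le_ringKrullDim_quotient hdim
  have hloc : IsLocalRing (Q ⧸ p) :=
    IsLocalRing.of_surjective' (Ideal.Quotient.mk p) Ideal.Quotient.mk_surjective
  have hlocal : IsLocalHom (Ideal.Quotient.mk p) :=
    IsLocalHom.of_surjective _ Ideal.Quotient.mk_surjective
  let g : (Q ⧸ Ideal.span {x}) →+*
      ((Q ⧸ p) ⧸ Ideal.span {Ideal.Quotient.mk p x}) :=
    Ideal.Quotient.lift _ ((Ideal.Quotient.mk _).comp (Ideal.Quotient.mk p)) (by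
      intro a ha
      obtain ⟨c, rfl⟩ := Ideal.mem_span_singleton'.1 ha
      rw [RingHom.comp_apply, Ideal.Quotient.eq_zero_iff_mem, map_mul]
      exact Ideal.mul_mem_left _ _ (Ideal.mem_span_singleton_self _))
  have hg : Function.Surjective g :=
    Ideal.Quotient.lift_surjective_of_surjective _ _
      (Ideal.Quotient.mk_surjective.comp Ideal.Quotient.mk_surjective)
  have hdimB : (n : WithBot ℕ∞) ≤
      ringKrullDim ((Q ⧸ p) ⧸ Ideal.span {Ideal.Quotient.mk p x}) := by
    exact WithBot.natCast_le_of_succ_le_add_one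
      (hpdim.trans (ringKrullDim_le_quotient_span_singleton_add_one
        (((IsLocalRing.mem_maximalIdeal _).2 fun h => hx (hlocal.map_nonunit _ h)))))
  have hpx : p ≤ Ideal.span {x} := by
    intro y hy
    by_contra hyx
    have := ringKrullDim_succ_le_of_surjective g hg (r := Ideal.Quotient.mk _ y)
      (mem_nonZeroDivisors_of_ne_zero (by rwa [Ne, Ideal.Quotient.eq_zero_iff_mem]))
      (by simp [g, Ideal.Quotient.eq_zero_iff_mem.2 hy])
    have h := (add_le_add_left hdimB 1).trans (this.trans hle)
    norm_cast at h
    omega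
  have hxp : x ∉ p := by
    intro hxp
    have := hpdim.trans ((ringKrullDim_le_of_surjective (Ideal.Quotient.factor
      ((Ideal.span_singleton_le_iff_mem p).2 hxp))
      (Ideal.Quotient.factor_surjective _)).trans hle)
    norm_cast at this
    omega
  have hbot : p = ⊥ := by
    refine Submodule.eq_bot_of_le_smul_of_le_jacobson_bot (Ideal.span {x}) p
      (IsNoetherian.noetherian p) ?_ ?_
    · intro y hy
      obtain ⟨c, rfl⟩ := Ideal.mem_span_singleton'.1 (hpx hy)
      rw [mul_comm]
      exact Submodule.smul_mem_smul (Ideal.mem_span_singleton_self x)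
        ((hp.mem_or_mem hy).resolve_right hxp)
    · rw [IsLocalRing.jacobson_eq_maximalIdeal _ bot_ne_top, Ideal.span_singleton_le_iff_mem]
      exact hx
  subst hbot
  exact ⟨IsDomain.of_bot_isPrime Q, fun h => hxp (by simp [h])⟩

/-- In a local ring of dimension at least `n` whose maximal ideal has `n` generators, these
generators form a regular sequence, and the ring is a domain. -/
theorem isDomain_and_isWeaklyRegular_of_ofList_eq_maximalIdeal (n : ℕ) {Q : Type u} [CommRing Q]
    [IsLocalRing Q] [IsNoetherianRing Q] (xs : List Q) (hn : xs.length = n)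
    (hm : Ideal.ofList xs = maximalIdeal Q)
    (hdim : (n : WithBot ℕ∞) ≤ ringKrullDim Q) :
    IsDomain Q ∧ IsWeaklyRegular Q xs := by
  induction n generalizing Q with
  | zero =>
    obtain rfl := List.length_eq_zero_iff.1 hn
    rw [Ideal.ofList_nil] at hm
    exact ⟨(IsLocalRing.isField_iff_maximalIdeal_eq.2 hm.symm).isDomain, IsWeaklyRegular.nil Q Q⟩
  | succ n ih =>
    obtain ⟨x, xs, rfl⟩ := List.exists_cons_of_length_eq_add_one hn
    have hx : x ∈ maximalIdeal Q := hm ▸ Ideal.subset_span (by simp)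
    have hne : Ideal.span {x} ≠ ⊤ := fun h =>
      (maximalIdeal.isMaximal Q).ne_top
        (top_le_iff.1 (h ▸ (Ideal.span_singleton_le_iff_mem _).2 hx))
    have : Nontrivial (Q ⧸ Ideal.span {x}) := Ideal.Quotient.nontrivial_iff.2 hne
    have hloc : IsLocalRing (Q ⧸ Ideal.span {x}) :=
      IsLocalRing.of_surjective' (Ideal.Quotient.mk _) Ideal.Quotient.mk_surjective
    have hm' : Ideal.ofList (xs.map (Ideal.Quotient.mk (Ideal.span {x}))) =
        maximalIdeal (Q ⧸ Ideal.span {x}) := by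
      have hlocal : IsLocalHom (Ideal.Quotient.mk (Ideal.span {x})) :=
        IsLocalHom.of_surjective _ Ideal.Quotient.mk_surjective
      have hmap : (maximalIdeal Q).map (Ideal.Quotient.mk (Ideal.span {x})) =
          maximalIdeal (Q ⧸ Ideal.span {x}) := by
        ext y
        obtain ⟨y, rfl⟩ := Ideal.Quotient.mk_surjective y
        simp [sup_eq_left.mpr (le_maximalIdeal hne)]
      rw [← hmap, ← hm, Ideal.ofList_cons, Ideal.map_sup, Ideal.map_quotient_self, bot_sup_eq,
        Ideal.map_ofList]
    have hlen : (xs.map (Ideal.Quotient.mk (Ideal.span {x}))).length = n := by simpa using hn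
    have hle := ringKrullDim_le_length _ hm'
    rw [hlen] at hle
    obtain ⟨hdom, hreg⟩ := ih _ hlen hm' (WithBot.natCast_le_of_succ_le_add_one
      (hdim.trans (ringKrullDim_le_quotient_span_singleton_add_one hx)))
    obtain ⟨hQ, hx0⟩ := isDomain_of_ringKrullDim_quotient_span_singleton hx hle hdim
    refine ⟨hQ, IsWeaklyRegular.cons (IsSMulRegular.of_ne_zero hx0) ?_⟩
    have e : QuotSMulTop x Q ≃ₗ[Q] Q ⧸ Ideal.span {x} :=
      Submodule.quotEquivOfEq _ _ (by simp [← Submodule.ideal_span_singleton_smul])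
    rw [e.isWeaklyRegular_congr]
    exact (isWeaklyRegular_map_algebraMap_iff (Q ⧸ Ideal.span {x}) _ xs).1 hreg

end RegularLocal

section FreeCover

variable {R : Type*} [CommRing R] {C : ℕ → Type*} [∀ n, AddCommGroup (C n)]
  [∀ n, Module R (C n)]

/-- A complex `(X, d)` with a chain map `π` to `(C, δ)` which is surjective with exact kernel. -/
structure IsExactCover {X : ℕ → Type*} [∀ n, AddCommGroup (X n)] [∀ n, Module R (X n)]
    (d : ∀ n, X (n + 1) →ₗ[R] X n) (δ : ∀ n, C (n + 1) →ₗ[R] C n)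
    (π : ∀ n, X n →ₗ[R] C n) : Prop where
  comp_eq_zero : ∀ n x, d n (d (n + 1) x) = 0
  comm : ∀ n x, π n (d n x) = δ n (π (n + 1) x)
  surjective_zero : Function.Surjective (π 0)
  exists_lift_zero : ∀ z c, π 0 z = δ 0 c → ∃ w, d 0 w = z ∧ π 1 w = c
  exists_lift : ∀ n z c, d n z = 0 → π (n + 1) z = δ (n + 1) c →
    ∃ w, d (n + 1) w = z ∧ π (n + 2) w = c

/-- One step in the construction of a finite free cover of a complex: the last free module so far,
its map to the complex, and its cycles. -/
structure FreeCoverStage (R : Type*) [CommRing R] (V : Type*) [AddCommGroup V] [Module R V] where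
  rank : ℕ
  map : (Fin rank → R) →ₗ[R] V
  cycles : Submodule R (Fin rank → R)

namespace FreeCoverStage

variable {V V' : Type*} [AddCommGroup V] [Module R V] [AddCommGroup V'] [Module R V']

/-- The pairs of a cycle and an element of the next module with the same image. -/
def pairs (S : FreeCoverStage R V) (δ : V' →ₗ[R] V) : Submodule R ((Fin S.rank → R) × V') :=
  S.cycles.comap (LinearMap.fst R _ _) ⊓
    LinearMap.ker (S.map ∘ₗ LinearMap.fst R _ _ - δ ∘ₗ LinearMap.snd R _ _)

variable [IsNoetherianRing R] [Module.Finite R V']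

theorem exists_cover (S : FreeCoverStage R V) (δ : V' →ₗ[R] V) :
    ∃ (k : ℕ) (φ : (Fin k → R) →ₗ[R] S.pairs δ), Function.Surjective φ :=
  Module.Finite.exists_fin' R _

/-- A finite free module covering the pairs of a stage. -/
noncomputable def cover (S : FreeCoverStage R V) (δ : V' →ₗ[R] V) :
    (Fin (S.exists_cover δ).choose → R) →ₗ[R] S.pairs δ :=
  (S.exists_cover δ).choose_spec.choose

theorem cover_surjective (S : FreeCoverStage R V) (δ : V' →ₗ[R] V) :
    Function.Surjective (S.cover δ) :=
  (S.exists_cover δ).choose_spec.choose_spec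

/-- The differential from the next stage. -/
noncomputable def differential (S : FreeCoverStage R V) (δ : V' →ₗ[R] V) :
    (Fin (S.exists_cover δ).choose → R) →ₗ[R] (Fin S.rank → R) :=
  LinearMap.fst R _ _ ∘ₗ (S.pairs δ).subtype ∘ₗ S.cover δ

/-- The next stage. -/
noncomputable def next (S : FreeCoverStage R V) (δ : V' →ₗ[R] V) : FreeCoverStage R V' where
  rank := (S.exists_cover δ).choose
  map := LinearMap.snd R _ _ ∘ₗ (S.pairs δ).subtype ∘ₗ S.cover δ
  cycles := LinearMap.ker (S.differential δ)

theorem differential_mem_cycles (S : FreeCoverStage R V) (δ : V' →ₗ[R] V) (x) :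
    S.differential δ x ∈ S.cycles :=
  (S.cover δ x).2.1

theorem map_differential (S : FreeCoverStage R V) (δ : V' →ₗ[R] V) (x) :
    S.map (S.differential δ x) = δ ((S.next δ).map x) :=
  sub_eq_zero.1 (S.cover δ x).2.2

theorem exists_lift (S : FreeCoverStage R V) (δ : V' →ₗ[R] V) {z} {c : V'} (hz : z ∈ S.cycles)
    (h : S.map z = δ c) : ∃ w, S.differential δ w = z ∧ (S.next δ).map w = c := by
  obtain ⟨w, hw⟩ := S.cover_surjective δ ⟨(z, c), hz, sub_eq_zero.2 h⟩
  exact ⟨w, by simp [differential, hw], congrArg (fun p => p.1.2) hw⟩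

end FreeCoverStage

/-- Every complex of finite modules over a noetherian ring has an exact cover by finite free
modules. -/
theorem exists_isExactCover [IsNoetherianRing R] [∀ n, Module.Finite R (C n)]
    (δ : ∀ n, C (n + 1) →ₗ[R] C n) :
    ∃ (s : ℕ → ℕ) (d : ∀ n, Matrix (Fin (s n)) (Fin (s (n + 1))) R)
      (π : ∀ n, (Fin (s n) → R) →ₗ[R] C n),
      IsExactCover (X := fun n => Fin (s n) → R) (fun n => (d n).actVec R) δ π := by
  obtain ⟨k, φ, hφ⟩ := Module.Finite.exists_fin' R (C 0)
  let S : ∀ n, FreeCoverStage R (C n) := fun n =>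
    Nat.rec ⟨k, φ, ⊤⟩ (fun n T => T.next (δ n)) n
  let d : ∀ n, (Fin (S (n + 1)).rank → R) →ₗ[R] (Fin (S n).rank → R) := fun n =>
    (S n).differential (δ n)
  have hd : ∀ n, (LinearMap.toMatrix' (d n)).actVec R = d n := by
    intro n
    refine LinearMap.ext fun v => ?_
    rw [← LinearMap.toMatrix'_mulVec (d n)]
    rfl
  refine ⟨fun n => (S n).rank, fun n => LinearMap.toMatrix' (d n), fun n => (S n).map, ?_⟩
  simp only [hd]
  exact
    { comp_eq_zero := fun n x => (S (n + 1)).differential_mem_cycles (δ (n + 1)) x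
      comm := fun n x => (S n).map_differential (δ n) x
      surjective_zero := hφ
      exists_lift_zero := fun z c h => (S 0).exists_lift (δ 0) trivial h
      exists_lift := fun n z c hz h => (S (n + 1)).exists_lift (δ (n + 1)) hz h }

namespace IsExactCover

variable {X : ℕ → Type*} [∀ n, AddCommGroup (X n)] [∀ n, Module R (X n)]
  {d : ∀ n, X (n + 1) →ₗ[R] X n} {δ : ∀ n, C (n + 1) →ₗ[R] C n} {π : ∀ n, X n →ₗ[R] C n}

theorem exists_cycle_lift (h : IsExactCover d δ π) (n : ℕ) (c : C (n + 1)) (hc : δ n c = 0) :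
    ∃ z, d n z = 0 ∧ π (n + 1) z = c := by
  cases n with
  | zero => exact h.exists_lift_zero 0 c (by simp [hc])
  | succ n => exact h.exists_lift n 0 c (by simp) (by simp [hc])

theorem surjective (h : IsExactCover d δ π) (hδ : ∀ n c, δ n (δ (n + 1) c) = 0) (n : ℕ) :
    Function.Surjective (π n) := by
  match n with
  | 0 => exact h.surjective_zero
  | 1 =>
    intro c
    obtain ⟨z, hz⟩ := h.surjective_zero (δ 0 c)
    obtain ⟨w, -, hw⟩ := h.exists_lift_zero z c hz
    exact ⟨w, hw⟩
  | n + 2 =>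
    intro c
    obtain ⟨z, hz, hz'⟩ := h.exists_cycle_lift n (δ (n + 1) c) (hδ n c)
    obtain ⟨w, -, hw⟩ := h.exists_lift n z c hz hz'
    exact ⟨w, hw⟩

theorem exact_of_exact (h : IsExactCover d δ π) {n : ℕ}
    (hX : ∀ x, d n x = 0 → ∃ y, d (n + 1) y = x) (c : C (n + 1)) (hc : δ n c = 0) :
    ∃ c', δ (n + 1) c' = c := by
  obtain ⟨z, hz, rfl⟩ := h.exists_cycle_lift n c hc
  obtain ⟨y, rfl⟩ := hX z hz
  exact ⟨_, (h.comm _ _).symm⟩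

section Zigzag

variable {ι : ℕ → Type*} [∀ j, Fintype (ι j)] {F : ∀ j, Matrix (ι j) (ι (j + 1)) R}

theorem exists_kernel_preimage (h : IsExactCover d δ π) (hδ : ∀ n c, δ n (δ (n + 1) c) = 0)
    (hF : ∀ j, F j * F (j + 1) = 0) {n : ℕ}
    (hX : ∀ j (x : ι (j + 1) → X n), (F j).actVec (X n) x = 0 →
      ∃ y, (F (j + 1)).actVec (X n) y = x)
    (hC : ∀ j (x : ι (j + 1) → C n), (F j).actVec (C n) x = 0 →
      ∃ y, (F (j + 1)).actVec (C n) y = x)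
    {j : ℕ} (x : ι (j + 1) → X n) (hx : (F j).actVec (X n) x = 0) (hπ : ∀ i, π n (x i) = 0) :
    ∃ y, (F (j + 1)).actVec (X n) y = x ∧ ∀ i, π n (y i) = 0 := by
  obtain ⟨y, rfl⟩ := hX j x hx
  obtain ⟨c, hc⟩ := hC (j + 1) (fun i => π n (y i)) (by
    rw [Matrix.actVec_comp]; ext i; exact hπ i)
  choose z hz using fun i => h.surjective hδ n (c i)
  refine ⟨y - (F (j + 2)).actVec (X n) z, ?_, fun i => ?_⟩
  · rw [map_sub, ← Matrix.actVec_mul, hF]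
    ext i
    simp [Matrix.actVec_apply]
  · have := congrFun (Matrix.actVec_comp (F (j + 2)) (π n) z) i
    simp only [hz, hc] at this
    simp [← this]

theorem exists_boundary_zero (h : IsExactCover d δ π) {j : ℕ} (y : ι j → X 0)
    (hy : ∀ i, π 0 (y i) = 0) :
    ∃ (a : ι j → X 1) (b : ι (j + 1) → X 0), (∀ i, π 1 (a i) = 0) ∧ (∀ i, π 0 (b i) = 0) ∧
      y = (fun i => d 0 (a i)) + (F j).actVec (X 0) b := by
  choose w hw hw' using fun i => h.exists_lift_zero (y i) 0 (by simp [hy i])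
  exact ⟨w, 0, hw', by simp, by ext i; simp [hw]⟩

theorem exists_boundary_succ (h : IsExactCover d δ π) (hF : ∀ j, F j * F (j + 1) = 0)
    {n j : ℕ} (y : ι j → X (n + 1)) (hy : ∀ i, π (n + 1) (y i) = 0) {u : ι (j + 1) → X n}
    (hyu : (fun i => d n (y i)) = (F j).actVec (X n) u)
    {a : ι (j + 1) → X (n + 1)} {b : ι (j + 2) → X n} (ha : ∀ i, π (n + 1) (a i) = 0)
    (hu : u = (fun i => d n (a i)) + (F (j + 1)).actVec (X n) b) :
    ∃ (a : ι j → X (n + 2)) (b : ι (j + 1) → X (n + 1)), (∀ i, π (n + 2) (a i) = 0) ∧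
      (∀ i, π (n + 1) (b i) = 0) ∧
      y = (fun i => d (n + 1) (a i)) + (F j).actVec (X (n + 1)) b := by
  subst hu
  rw [map_add, ← Matrix.actVec_mul, hF, Matrix.actVec_comp] at hyu
  have hπa : ∀ i, π (n + 1) ((F j).actVec (X (n + 1)) a i) = 0 := fun i => by
    rw [← congrFun (Matrix.actVec_comp (F j) (π (n + 1)) a) i]
    simp [ha, Matrix.actVec_apply]
  choose w hw hw' using fun i => h.exists_lift n (y i - (F j).actVec (X (n + 1)) a i) 0 (by
    have := congrFun hyu i
    simp only [Pi.add_apply, Matrix.actVec_apply, Matrix.zero_apply, zero_smul,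
      Finset.sum_const_zero, add_zero] at this
    rw [map_sub, this, sub_eq_zero, Matrix.actVec_apply]) (by simp [hπa, hy])
  exact ⟨w, a, hw', ha, by ext i; simp [hw]⟩

/-- In the double complex formed by the kernel of the cover and `F`, a total cycle is, up to its
remaining components, a total boundary. -/
theorem exists_boundary (h : IsExactCover d δ π) (hδ : ∀ n c, δ n (δ (n + 1) c) = 0)
    (hF : ∀ j, F j * F (j + 1) = 0)
    (hX : ∀ n j (x : ι (j + 1) → X n), (F j).actVec (X n) x = 0 →
      ∃ y, (F (j + 1)).actVec (X n) y = x)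
    (hC : ∀ n j (x : ι (j + 1) → C n), (F j).actVec (C n) x = 0 →
      ∃ y, (F (j + 1)).actVec (C n) y = x)
    (n : ℕ) {j : ℕ} (y : ι j → X (n + 1)) (hy : ∀ i, π (n + 1) (y i) = 0)
    (u : ι (j + 1) → X n) (hu : ∀ i, π n (u i) = 0)
    (hyu : (fun i => d n (y i)) = (F j).actVec (X n) u) :
    ∃ (a : ι j → X (n + 2)) (b : ι (j + 1) → X (n + 1)), (∀ i, π (n + 2) (a i) = 0) ∧
      (∀ i, π (n + 1) (b i) = 0) ∧
      y = (fun i => d (n + 1) (a i)) + (F j).actVec (X (n + 1)) b := by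
  induction n generalizing j with
  | zero =>
    obtain ⟨a, b, ha, -, hab⟩ := h.exists_boundary_zero (F := F) u hu
    exact h.exists_boundary_succ hF y hy hyu ha hab
  | succ n ih =>
    obtain ⟨u', hu', hu''⟩ := h.exists_kernel_preimage hδ hF (hX n) (hC n) (j := j)
      (fun i => d n (u i)) (by
        rw [Matrix.actVec_comp, ← hyu]
        ext i
        exact h.comp_eq_zero n (y i)) (fun i => by rw [h.comm, hu, map_zero])
    obtain ⟨a, b, ha, -, hab⟩ := ih u hu u' hu'' hu'.symm
    exact h.exists_boundary_succ hF y hy hyu ha hab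

/-- If in degree `n + 1` each cycle of `C` modulo the image of `F 0` is a boundary modulo this
image, then the same holds for the cover `X`. -/
theorem exists_boundary_of_base (h : IsExactCover d δ π) (hδ : ∀ n c, δ n (δ (n + 1) c) = 0)
    (hF : ∀ j, F j * F (j + 1) = 0)
    (hX : ∀ n j (x : ι (j + 1) → X n), (F j).actVec (X n) x = 0 →
      ∃ y, (F (j + 1)).actVec (X n) y = x)
    (hC : ∀ n j (x : ι (j + 1) → C n), (F j).actVec (C n) x = 0 →
      ∃ y, (F (j + 1)).actVec (C n) y = x)
    {n : ℕ}
    (hn : ∀ (c : ι 0 → C (n + 1)) (e : ι 1 → C n),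
      (fun i => δ n (c i)) = (F 0).actVec (C n) e →
      ∃ (a : ι 0 → C (n + 2)) (b : ι 1 → C (n + 1)),
        c = (fun i => δ (n + 1) (a i)) + (F 0).actVec (C (n + 1)) b)
    (y : ι 0 → X (n + 1)) (u : ι 1 → X n) (hyu : (fun i => d n (y i)) = (F 0).actVec (X n) u) :
    ∃ (a : ι 0 → X (n + 2)) (b : ι 1 → X (n + 1)),
      y = (fun i => d (n + 1) (a i)) + (F 0).actVec (X (n + 1)) b := by
  obtain ⟨c, e, hce⟩ := hn (fun i => π (n + 1) (y i)) (fun i => π n (u i)) (by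
    rw [Matrix.actVec_comp, ← hyu]
    simp only [h.comm])
  choose a ha using fun i => h.surjective hδ _ (c i)
  choose b hb using fun i => h.surjective hδ _ (e i)
  have hy' : ∀ i,
      π (n + 1) ((y - (fun i => d (n + 1) (a i)) - (F 0).actVec (X (n + 1)) b) i) = 0 := by
    intro i
    have h₁ := congrFun hce i
    have h₂ := congrFun (Matrix.actVec_comp (F 0) (π (n + 1)) b) i
    simp only [hb] at h₂
    simp only [Pi.add_apply] at h₁
    simp only [Pi.sub_apply, map_sub, h.comm, ha, ← h₂, h₁]
    abel
  have hdy' : (fun i => d n ((y - (fun i => d (n + 1) (a i)) - (F 0).actVec (X (n + 1)) b) i)) =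
      (F 0).actVec (X n) (u - fun i => d n (b i)) := by
    rw [map_sub, ← hyu, Matrix.actVec_comp]
    ext i
    simp [h.comp_eq_zero]
  obtain ⟨c', hc'⟩ := hC n 0 (fun i => π n ((u - fun i => d n (b i)) i)) (by
    rw [Matrix.actVec_comp, ← hdy']
    ext i
    simp only [h.comm, hy', map_zero, Pi.zero_apply])
  choose x hx using fun i => h.surjective hδ _ (c' i)
  obtain ⟨a', b', -, -, hab⟩ := h.exists_boundary hδ hF hX hC n
    (y - (fun i => d (n + 1) (a i)) - (F 0).actVec (X (n + 1)) b) hy'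
    (u - (fun i => d n (b i)) - (F 1).actVec (X n) x) (fun i => by
      have h₁ := congrFun hc' i
      have h₂ := congrFun (Matrix.actVec_comp (F 1) (π n) x) i
      simp only [hx] at h₂
      rw [Pi.sub_apply, map_sub, ← h₁, ← h₂, sub_self]) (by
      rw [hdy', map_sub _ (u - _), ← Matrix.actVec_mul, hF]
      ext i
      simp [Matrix.actVec_apply, smul_sub])
  refine ⟨a + a', b + b', ?_⟩
  rw [sub_sub, sub_eq_iff_eq_add] at hab
  rw [hab, map_add]
  ext i
  simp only [Pi.add_apply, map_add]
  abel

end Zigzag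

end IsExactCover

end FreeCover

section Tor

variable {R : Type u} [CommRing R]

/-- Matrices over `R` describing a resolution of `W` by finite free modules. -/
structure IsMatrixResolution {W : Type*} [AddCommGroup W] [Module R W] {r : ℕ → ℕ}
    (g : ∀ n, Matrix (Fin (r n)) (Fin (r (n + 1))) R) (q : (Fin (r 0) → R) →ₗ[R] W) : Prop where
  surjective : Function.Surjective q
  exact_zero : Function.Exact ((g 0).actVec R) q
  exact_succ : ∀ n, Function.Exact ((g (n + 1)).actVec R) ((g n).actVec R)

theorem exists_isMatrixResolution [IsNoetherianRing R] (W : Type*) [AddCommGroup W] [Module R W]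
    [Module.Finite R W] :
    ∃ (r : ℕ → ℕ) (g : ∀ n, Matrix (Fin (r n)) (Fin (r (n + 1))) R)
      (q : (Fin (r 0) → R) →ₗ[R] W), IsMatrixResolution g q := by
  obtain ⟨r, g, π, h⟩ := exists_isExactCover (R := R)
    (C := fun n => ↥(if n = 0 then ⊤ else ⊥ : Submodule R W)) (fun _ => 0)
  have hsub : ∀ n, Subsingleton ↥(if n + 1 = 0 then ⊤ else ⊥ : Submodule R W) := by
    intro n
    rw [if_neg (Nat.succ_ne_zero n)]
    infer_instance
  refine ⟨r, g, Submodule.subtype _ ∘ₗ π 0, ⟨fun w => ?_, fun v => ?_, fun n v => ?_⟩⟩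
  · obtain ⟨x, hx⟩ := h.surjective_zero ⟨w, by simp⟩
    exact ⟨x, by simp [hx]⟩
  · constructor
    · intro hv
      obtain ⟨w, hw, -⟩ := h.exists_lift_zero v 0 (by
        apply Subtype.ext
        simpa using hv)
      exact ⟨w, hw⟩
    · rintro ⟨w, rfl⟩
      simp [h.comm]
  · constructor
    · intro hv
      obtain ⟨w, hw, -⟩ := h.exists_lift n v 0 hv (Subsingleton.elim _ _)
      exact ⟨w, hw⟩
    · rintro ⟨w, rfl⟩
      exact h.comp_eq_zero n w

theorem IsMatrixResolution.mul_eq_zero {W : Type*} [AddCommGroup W] [Module R W] {r : ℕ → ℕ}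
    {g : ∀ n, Matrix (Fin (r n)) (Fin (r (n + 1))) R} {q : (Fin (r 0) → R) →ₗ[R] W}
    (h : IsMatrixResolution g q) (n : ℕ) : g n * g (n + 1) = 0 := by
  ext i k
  have := congrFun ((h.exact_succ n _).2 ⟨Pi.single k 1, rfl⟩) i
  rw [← Matrix.actVec_mul] at this
  simpa [Matrix.actVec_apply, Pi.single_apply] using this

open CategoryTheory CategoryTheory.Limits

/-- The complex of finite free modules given by matrices with successive products zero. -/
noncomputable def matrixComplex {r : ℕ → ℕ} (g : ∀ n, Matrix (Fin (r n)) (Fin (r (n + 1))) R)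
    (hg : ∀ n, g n * g (n + 1) = 0) : ChainComplex (ModuleCat.{u} R) ℕ :=
  ChainComplex.of (fun n => ModuleCat.of R (Fin (r n) → R))
    (fun n => ModuleCat.ofHom ((g n).actVec R)) (fun n => by
      ext : 1
      refine LinearMap.ext fun v => ?_
      have : (g n).actVec R ((g (n + 1)).actVec R v) = 0 := by
        rw [← Matrix.actVec_mul, hg]
        ext i
        simp [Matrix.actVec_apply]
      exact this)

theorem matrixComplex_d {r : ℕ → ℕ} (g : ∀ n, Matrix (Fin (r n)) (Fin (r (n + 1))) R)
    (hg : ∀ n, g n * g (n + 1) = 0) (n : ℕ) :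
    (matrixComplex g hg).d (n + 1) n = ModuleCat.ofHom ((g n).actVec R) :=
  ChainComplex.of_d (fun n => ModuleCat.of R (Fin (r n) → R))
    (fun n => ModuleCat.ofHom ((g n).actVec R)) n

/-- A resolution given by matrices defines a projective resolution. -/
theorem IsMatrixResolution.exists_projectiveResolution {L : ModuleCat.{u} R} {r : ℕ → ℕ}
    {g : ∀ n, Matrix (Fin (r n)) (Fin (r (n + 1))) R} {q : (Fin (r 0) → R) →ₗ[R] L}
    (h : IsMatrixResolution g q) :
    ∃ P : ProjectiveResolution L, P.complex = matrixComplex g h.mul_eq_zero := by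
  have hq : (matrixComplex g h.mul_eq_zero).d 1 0 ≫
      (ModuleCat.ofHom q : (matrixComplex g h.mul_eq_zero).X 0 ⟶ L) = 0 := by
    rw [matrixComplex_d]
    ext : 1
    exact h.exact_zero.linearMap_comp_eq_zero
  have hproj : ∀ n, Projective ((matrixComplex g h.mul_eq_zero).X n) := by
    intro n
    change Projective (ModuleCat.of R (Fin (r n) → R))
    infer_instance
  have hqis : QuasiIso (((matrixComplex g h.mul_eq_zero).toSingle₀Equiv L).symm
      ⟨ModuleCat.ofHom q, hq⟩) := by
    refine ⟨fun n => ?_⟩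
    cases n with
    | zero =>
      rw [ChainComplex.quasiIsoAt₀_iff, ShortComplex.quasiIso_iff_of_zeros' _ rfl rfl rfl]
      refine (ShortComplex.exact_and_epi_g_iff_of_iso (S₂ := ShortComplex.mk _ _ hq) ?_).2 ⟨?_, ?_⟩
      · exact ShortComplex.isoMk (Iso.refl _) (Iso.refl _) (Iso.refl _)
          ((Category.id_comp _).trans (Category.comp_id _).symm)
          ((Category.id_comp _).trans
            ((ChainComplex.toSingle₀Equiv_symm_apply_f_zero _ hq).symm.trans
              (Category.comp_id _).symm))
      · rw [ShortComplex.ShortExact.moduleCat_exact_iff_function_exact]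
        have hd : (⇑(ModuleCat.Hom.hom ((matrixComplex g h.mul_eq_zero).d 1 0)) :
            (Fin (r 1) → R) → (Fin (r 0) → R)) = (g 0).actVec R :=
          congrArg (fun φ => ⇑(ModuleCat.Hom.hom φ)) (matrixComplex_d g h.mul_eq_zero 0)
        exact (congrArg (fun φ => Function.Exact φ q) hd).mpr h.exact_zero
      · exact (ModuleCat.epi_iff_surjective _).2 h.surjective
    | succ n =>
      rw [quasiIsoAt_iff_exactAt' (hL := ChainComplex.exactAt_succ_single_obj ..),
          HomologicalComplex.exactAt_iff' _ (n + 2) (n + 1) n (by simp) (by simp),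
          ShortComplex.ShortExact.moduleCat_exact_iff_function_exact]
      dsimp only [HomologicalComplex.sc', HomologicalComplex.shortComplexFunctor']
      rw [matrixComplex_d, matrixComplex_d]
      exact h.exact_succ n
  exact ⟨{ complex := _, projective := hproj, π := _, quasiIso := hqis }, rfl⟩

open TensorProduct in
theorem Matrix.piScalarRight_lTensor {a b : ℕ} (A : Matrix (Fin a) (Fin b) R) (W : Type*)
    [AddCommGroup W] [Module R W] (t : W ⊗[R] (Fin b → R)) :
    TensorProduct.piScalarRight R R W (Fin a) ((A.actVec R).lTensor W t) =
      A.actVec W (TensorProduct.piScalarRight R R W (Fin b) t) := by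
  induction t using TensorProduct.induction_on with
  | zero => simp
  | add x y hx hy => simp only [map_add, hx, hy]
  | tmul w v =>
    ext i
    simp [Matrix.actVec_apply, Finset.sum_smul, mul_smul]

/-- The vanishing of `Tor` in terms of a resolution given by matrices. -/
theorem IsMatrixResolution.isZero_tor_iff {L : ModuleCat.{u} R} {r : ℕ → ℕ}
    {g : ∀ n, Matrix (Fin (r n)) (Fin (r (n + 1))) R} {q : (Fin (r 0) → R) →ₗ[R] L}
    (h : IsMatrixResolution g q) (A : ModuleCat.{u} R) (n : ℕ) :
    IsZero (((Tor (ModuleCat.{u} R) (n + 1)).obj A).obj L) ↔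
      Function.Exact ((g (n + 1)).actVec A) ((g n).actVec A) := by
  obtain ⟨P, hP⟩ := h.exists_projectiveResolution
  have e := P.isoLeftDerivedObj ((MonoidalCategory.tensoringLeft (ModuleCat.{u} R)).obj A) (n + 1)
  rw [hP] at e
  have h₁ : Function.Exact ((g (n + 1)).actVec A) ((g n).actVec A) ↔
      Function.Exact (((g (n + 1)).actVec R).lTensor A) (((g n).actVec R).lTensor A) :=
    Function.Exact.iff_of_ladder_linearEquiv (e₁ := TensorProduct.piScalarRight R R A _)
      (e₂ := TensorProduct.piScalarRight R R A _) (e₃ := TensorProduct.piScalarRight R R A _)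
      (LinearMap.ext fun t => (Matrix.piScalarRight_lTensor _ _ t).symm)
      (LinearMap.ext fun t => (Matrix.piScalarRight_lTensor _ _ t).symm)
  rw [h₁]
  refine e.isZero_iff.trans ?_
  refine (HomologicalComplex.exactAt_iff_isZero_homology _ _).symm.trans ?_
  rw [HomologicalComplex.exactAt_iff' _ (n + 2) (n + 1) n (by simp) (by simp)]
  rw [ShortComplex.ShortExact.moduleCat_exact_iff_function_exact]
  dsimp only [HomologicalComplex.sc', HomologicalComplex.shortComplexFunctor',
    Functor.mapHomologicalComplex]
  rw [matrixComplex_d, matrixComplex_d]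
  rfl

end Tor

section Comparison

variable {R : Type u} [CommRing R] {W : Type*} [AddCommGroup W] [Module R W]

theorem Matrix.actVec_pi_apply {m n κ : Type*} [Fintype n] (A : Matrix m n R) (v : n → κ → W)
    (i : m) (k : κ) : A.actVec (κ → W) v i k = A.actVec W (fun j => v j k) i := by
  simp [Matrix.actVec_apply, Finset.sum_apply]

theorem Matrix.actVec_pi_exact {l m n κ : Type*} [Fintype m] [Fintype n] {A : Matrix l m R}
    {B : Matrix m n R} (h : ∀ v : m → W, A.actVec W v = 0 → ∃ w, B.actVec W w = v)
    (v : m → κ → W) (hv : A.actVec (κ → W) v = 0) : ∃ w, B.actVec (κ → W) w = v := by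
  choose w hw using fun k => h (fun j => v j k) (by
    ext i
    rw [← Matrix.actVec_pi_apply, hv]
    rfl)
  refine ⟨fun j k => w k j, ?_⟩
  ext i k
  rw [Matrix.actVec_pi_apply]
  exact congrFun (hw k) i

section Cokernel

variable {P : Type*} [AddCommGroup P] [Module R P] {b₀ b₁ k₀ k₁ k₂ : Type*} [Fintype b₁]
  [Fintype k₁] [Fintype k₂] {F : Matrix b₀ b₁ R} {ρ : (b₀ → W) →ₗ[R] P}
  {A : Matrix k₀ k₁ R} {B : Matrix k₁ k₂ R}

/-- Exactness on a cokernel, expressed on the source of the cokernel map. -/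
theorem exists_eq_add_of_exact_cokernel (hρ : Function.Surjective ρ)
    (hF : Function.Exact (F.actVec W) ρ)
    (hP : ∀ v : k₁ → P, A.actVec P v = 0 → ∃ w, B.actVec P w = v)
    (c : b₀ → k₁ → W) (e : b₁ → k₀ → W)
    (hce : (fun i => A.actVec W (c i)) = F.actVec (k₀ → W) e) :
    ∃ (a : b₀ → k₂ → W) (b : b₁ → k₁ → W),
      c = (fun i => B.actVec W (a i)) + F.actVec (k₁ → W) b := by
  obtain ⟨w, hw⟩ := hP (fun k => ρ fun i => c i k) (by
    rw [Matrix.actVec_comp]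
    ext k
    refine (hF _).2 ⟨fun j => e j k, ?_⟩
    ext i
    rw [← Matrix.actVec_pi_apply, ← hce, Matrix.actVec_pi_apply])
  choose a ha using fun k => hρ (w k)
  choose b hb using fun k => (hF ((fun i => c i k) - B.actVec (b₀ → W) a k)).1 (by
    rw [map_sub, ← congrFun (Matrix.actVec_comp B ρ a) k]
    simp only [ha, hw, sub_self])
  refine ⟨fun i k => a k i, fun j k => b k j, ?_⟩
  ext i k
  have := congrFun (hb k) i
  rw [Pi.add_apply, Pi.add_apply, Matrix.actVec_pi_apply, this, Pi.sub_apply,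
    Matrix.actVec_pi_apply]
  abel

/-- A criterion for exactness on a cokernel. -/
theorem exact_cokernel_of_exists_eq_add (hρ : Function.Surjective ρ)
    (hF : Function.Exact (F.actVec W) ρ)
    (h : ∀ (c : b₀ → k₁ → W) (e : b₁ → k₀ → W),
      (fun i => A.actVec W (c i)) = F.actVec (k₀ → W) e →
      ∃ (a : b₀ → k₂ → W) (b : b₁ → k₁ → W),
        c = (fun i => B.actVec W (a i)) + F.actVec (k₁ → W) b)
    (v : k₁ → P) (hv : A.actVec P v = 0) : ∃ w, B.actVec P w = v := by
  choose y hy using fun k => hρ (v k)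
  choose e he using fun k => (hF (A.actVec (b₀ → W) y k)).1 (by
    rw [← congrFun (Matrix.actVec_comp A ρ y) k]
    simp only [hy, hv, Pi.zero_apply])
  obtain ⟨a, b, hab⟩ := h (fun i k => y k i) (fun j k => e k j) (by
    ext i k
    rw [Matrix.actVec_pi_apply, he, Matrix.actVec_pi_apply])
  refine ⟨fun k => ρ fun i => a i k, ?_⟩
  rw [Matrix.actVec_comp]
  ext k
  rw [← hy, eq_comm, ← sub_eq_zero, ← map_sub, hF]
  refine ⟨fun j => b j k, ?_⟩
  ext i
  have := congrFun (congrFun hab i) k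
  rw [Pi.add_apply, Pi.add_apply, Matrix.actVec_pi_apply F] at this
  rw [Pi.sub_apply, this, Matrix.actVec_pi_apply]
  abel

end Cokernel

open TensorProduct in
theorem IsMatrixResolution.exists_tensor_cokernel {N : Type*} [AddCommGroup N] [Module R N]
    {r : ℕ → ℕ} {g : ∀ n, Matrix (Fin (r n)) (Fin (r (n + 1))) R} {q : (Fin (r 0) → R) →ₗ[R] N}
    (h : IsMatrixResolution g q) :
    ∃ ρ : (Fin (r 0) → W) →ₗ[R] W ⊗[R] N, Function.Surjective ρ ∧
      Function.Exact ((g 0).actVec W) ρ := by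
  refine ⟨q.lTensor W ∘ₗ (TensorProduct.piScalarRight R R W (Fin (r 0))).symm.toLinearMap,
    (LinearMap.lTensor_surjective W h.surjective).comp (LinearEquiv.surjective _), ?_⟩
  refine (Function.Exact.iff_of_ladder_linearEquiv
    (e₁ := TensorProduct.piScalarRight R R W _) (e₂ := TensorProduct.piScalarRight R R W _)
    (e₃ := LinearEquiv.refl R _)
    (LinearMap.ext fun t => (Matrix.piScalarRight_lTensor _ _ t).symm)
    (LinearMap.ext fun t =>
      congrArg (q.lTensor W) (LinearEquiv.symm_apply_apply _ t))).2
    (lTensor_exact W h.exact_zero h.surjective)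

/-- If `F` resolves `N` and stays exact on `M`, and if `g` is eventually exact on `M ⊗ N`, then
some complex of finite free modules is eventually exact on `N`, and the exactness of this complex
implies the exactness of `g` on `M`. -/
theorem exists_complex_eventuallyExact [IsNoetherianRing R] {M N : Type*} [AddCommGroup M]
    [Module R M] [Module.Finite R M] [AddCommGroup N] [Module R N] {r t : ℕ → ℕ}
    {F : ∀ n, Matrix (Fin (r n)) (Fin (r (n + 1))) R} {q : (Fin (r 0) → R) →ₗ[R] N}
    (h : IsMatrixResolution F q)
    (hM : ∀ n, Function.Exact ((F (n + 1)).actVec M) ((F n).actVec M))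
    {g : ∀ n, Matrix (Fin (t n)) (Fin (t (n + 1))) R} (hg : ∀ n, g n * g (n + 1) = 0)
    (hMN : EventuallyExact (ι := fun n => Fin (t n)) (TensorProduct R M N) g) :
    ∃ (s : ℕ → ℕ) (d : ∀ n, Matrix (Fin (s n)) (Fin (s (n + 1))) R),
      (∀ n, d n * d (n + 1) = 0) ∧ EventuallyExact (ι := fun n => Fin (s n)) N d ∧
      (EventuallyExact (ι := fun n => Fin (s n)) R d →
        EventuallyExact (ι := fun n => Fin (t n)) M g) := by
  obtain ⟨s, d, π, hc⟩ := exists_isExactCover (R := R) (C := fun n => Fin (t n) → M)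
    (fun n => (g n).actVec M)
  refine ⟨s, d, fun n => ?_, ?_, ?_⟩
  · ext i k
    have := congrFun (hc.comp_eq_zero n (Pi.single k 1)) i
    rw [← Matrix.actVec_mul] at this
    simpa [Matrix.actVec_apply, Pi.single_apply] using this
  · obtain ⟨ρ, hρ, hρF⟩ := h.exists_tensor_cokernel (W := M)
    obtain ⟨n₀, hn₀⟩ := hMN
    refine ⟨n₀, fun n hn => exact_cokernel_of_exists_eq_add h.surjective h.exact_zero ?_⟩
    refine hc.exists_boundary_of_base (ι := fun n => Fin (r n)) (F := F) (fun n c => ?_)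
      h.mul_eq_zero
      (fun n j => Matrix.actVec_pi_exact fun v hv => (h.exact_succ j v).1 hv)
      (fun n j => Matrix.actVec_pi_exact fun v hv => (hM j v).1 hv)
      (exists_eq_add_of_exact_cokernel hρ hρF (hn₀ n hn))
    rw [← Matrix.actVec_mul, hg]
    ext i
    simp [Matrix.actVec_apply]
  · rintro ⟨n₀, hn₀⟩
    exact ⟨n₀, fun n hn => hc.exact_of_exact (hn₀ n hn)⟩

open RingTheory.Sequence in
/-- Over a complete intersection, a nonzero finite module detects eventual exactness of complexes
of finite free modules. -/
theorem EventuallyExact.of_nontrivial {Q : Type u} [CommRing Q] [IsLocalRing Q]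
    (hQ : IsRegularLocal Q) (f : List Q) (hf : IsWeaklyRegular Q f) {N : Type*} [AddCommGroup N]
    [Module (Q ⧸ Ideal.ofList f) N] [Module.Finite (Q ⧸ Ideal.ofList f) N] [Nontrivial N]
    {s : ℕ → ℕ} (d : ∀ n, Matrix (Fin (s n)) (Fin (s (n + 1))) (Q ⧸ Ideal.ofList f))
    (hd : ∀ n, d n * d (n + 1) = 0) (hN : EventuallyExact (ι := fun n => Fin (s n)) N d) :
    EventuallyExact (ι := fun n => Fin (s n)) (Q ⧸ Ideal.ofList f) d := by
  obtain ⟨hnoeth, S, hS, hdim⟩ := hQ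
  have hm : Ideal.ofList S.toList = IsLocalRing.maximalIdeal Q := by
    rw [← hS, Ideal.ofList]
    simp
  have hreg := (isDomain_and_isWeaklyRegular_of_ofList_eq_maximalIdeal S.card S.toList
    S.length_toList hm hdim.le).2
  let _ : Module Q N := Module.compHom N (Ideal.Quotient.mk (Ideal.ofList f))
  have hsmul : ∀ (a : Q) (w : N), a • w = Ideal.Quotient.mk (Ideal.ofList f) a • w :=
    fun _ _ => rfl
  have : IsScalarTower Q (Q ⧸ Ideal.ofList f) N := ⟨fun a b w => by
    obtain ⟨b, rfl⟩ := Ideal.Quotient.mk_surjective b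
    rw [hsmul, ← mul_smul]
    rfl⟩
  have : Module.Finite Q N := Module.Finite.trans (Q ⧸ Ideal.ofList f) N
  have hlift : ∀ n, ∃ A : Matrix (Fin (s n)) (Fin (s (n + 1))) Q,
      ∀ i k, Ideal.Quotient.mk (Ideal.ofList f) (A i k) = d n i k := fun n => by
    choose A hA using fun i k => Ideal.Quotient.mk_surjective (d n i k)
    exact ⟨Matrix.of A, hA⟩
  choose D hD using hlift
  have hact : ∀ n (v : Fin (s (n + 1)) → N),
      (D n).actVec N v = (d n).actVec N v := by
    intro n v
    ext i
    simp only [Matrix.actVec_apply, hsmul, hD]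
  have hmk : ∀ n (v : Fin (s (n + 1)) → Q) (i : Fin (s n)), Ideal.Quotient.mk (Ideal.ofList f)
      ((D n).actVec Q v i) =
      (d n).actVec _ (fun j => Ideal.Quotient.mk (Ideal.ofList f) (v j)) i := by
    intro n v i
    simp [Matrix.actVec_apply, hD]
  obtain ⟨n₀, hn₀⟩ := detectsMod_ofList (W := N) S.toList hreg hm f hf
    (fun a ha w => by rw [hsmul, Ideal.Quotient.eq_zero_iff_mem.2 ha, zero_smul])
    (fun n => Fin (s n)) D
    (fun n i k => by
      rw [← Ideal.Quotient.eq_zero_iff_mem, Matrix.mul_apply, map_sum]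
      simp only [map_mul, hD]
      rw [← Matrix.mul_apply, hd, Matrix.zero_apply])
    (by simpa only [EventuallyExact, hact] using hN)
  refine ⟨n₀, fun n hn v hv => ?_⟩
  choose x hx using fun i => Ideal.Quotient.mk_surjective (v i)
  obtain ⟨w, hw⟩ := hn₀ n hn x (fun i => by
    rw [← Ideal.Quotient.eq_zero_iff_mem, hmk]
    simp only [hx, hv, Pi.zero_apply])
  refine ⟨fun i => Ideal.Quotient.mk _ (w i), ?_⟩
  ext i
  have := Ideal.Quotient.eq_zero_iff_mem.2 (hw i)
  rw [map_sub, hmk, hx, sub_eq_zero] at this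
  exact this.symm

end Comparison

theorem stmt_2 (Q : Type u) [CommRing Q] [IsLocalRing Q] (hQ : IsRegularLocal Q)
    (f : List Q) (hf : RingTheory.Sequence.IsRegular Q f)
    (M N L : ModuleCat.{u} (Q ⧸ Ideal.ofList f))
    [Module.Finite (Q ⧸ Ideal.ofList f) M] [Module.Finite (Q ⧸ Ideal.ofList f) N]
    [Module.Finite (Q ⧸ Ideal.ofList f) L]
    (hN : Nontrivial N)
    (htor : ∀ i : ℕ, 0 < i →
      IsZero (((Tor (ModuleCat.{u} (Q ⧸ Ideal.ofList f)) i).obj M).obj N))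
    (htorL : ∃ n : ℕ, ∀ i : ℕ, n ≤ i →
      IsZero (((Tor (ModuleCat.{u} (Q ⧸ Ideal.ofList f)) i).obj
        (MonoidalCategory.tensorObj M N)).obj L)) :
    ∃ n : ℕ, ∀ i : ℕ, n ≤ i →
      IsZero (((Tor (ModuleCat.{u} (Q ⧸ Ideal.ofList f)) i).obj M).obj L) := by
  have hnoeth : IsNoetherianRing Q := hQ.1
  obtain ⟨r, F, q, hF⟩ := exists_isMatrixResolution (R := Q ⧸ Ideal.ofList f) N
  obtain ⟨t, g, p, hg⟩ := exists_isMatrixResolution (R := Q ⧸ Ideal.ofList f) L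
  obtain ⟨n₀, hn₀⟩ := htorL
  obtain ⟨s, d, hd, hdN, hdM⟩ := exists_complex_eventuallyExact hF
    (fun n => (hF.isZero_tor_iff M n).1 (htor (n + 1) n.succ_pos)) hg.mul_eq_zero
    ⟨n₀, fun n hn v => ((hg.isZero_tor_iff (MonoidalCategory.tensorObj M N) n).1
      (hn₀ (n + 1) (by omega)) v).1⟩
  obtain ⟨n₁, hn₁⟩ := hdM (EventuallyExact.of_nontrivial hQ f hf.toIsWeaklyRegular d hd hdN)
  refine ⟨n₁ + 1, fun i hi => ?_⟩
  obtain ⟨n, rfl⟩ := Nat.exists_eq_add_of_le' (Nat.one_le_of_lt hi)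
  refine (hg.isZero_tor_iff M n).2 fun v => ⟨hn₁ n (by omega) v, ?_⟩
  rintro ⟨w, rfl⟩
  rw [← Matrix.actVec_mul, hg.mul_eq_zero]
  ext i
  simp [Matrix.actVec_apply]
end
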